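/- arXiv:1305.7473 — 5 statements merged into one kernel-verified Lean document; each statement's English description precedes it below -/
import Mathlib

section
/- There exists a finite simple graph G such that every orientation G⃗ of G satisfies ψ_d(G⃗) < ψ(G); that is, ψ_{d,max}(G), defined as the maximum of ψ_d(G⃗) over all orientations G⃗ of G, is strictly smaller than ψ(G). -/
open Classical

/-- The underlying undirected simple graph of a digraph given by an arc relation `D`. -/
def underlying {V : Type*} (D : V → V → Prop) : SimpleGraph V := SimpleGraph.fromRel D

/-- `D` is an orientation of the simple graph `G`: every arc of `D` lies on an edge of `G`,
and every edge of `G` carries exactly one of its two possible orientations as an arc. -/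
def IsOrientation {V : Type*} (G : SimpleGraph V) (D : V → V → Prop) : Prop :=
  (∀ u v, D u v → G.Adj u v) ∧ (∀ u v, G.Adj u v → (D u v ↔ ¬ D v u))

/-- The local chromatic number `ψ(G)`: the minimum over proper colorings `c` of
`max_v |{c(u) : u ∈ N(v)}| + 1`. -/
noncomputable def localChrom {V : Type*} [Fintype V] (G : SimpleGraph V) : ℕ :=
  sInf {n | ∃ c : V → ℕ, (∀ u v, G.Adj u v → c u ≠ c v) ∧
    n = Finset.univ.sup (fun v => (c '' {u | G.Adj v u}).ncard) + 1}

/-- The directed local chromatic number `ψ_d(D)`: the minimum over proper colorings of the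
underlying graph of `max_v |{c(u) : u ∈ N₊(v)}| + 1`. -/
noncomputable def dirLocalChrom {V : Type*} [Fintype V] (D : V → V → Prop) : ℕ :=
  sInf {n | ∃ c : V → ℕ, (∀ u v, (underlying D).Adj u v → c u ≠ c v) ∧
    n = Finset.univ.sup (fun v => (c '' {u | D v u}).ncard) + 1}

/-- `g` is a proper coloring in which every vertex sees at most two colors. -/
def IsLoc {W : Type*} (H : SimpleGraph W) (g : W → ℕ) : Prop :=
  (∀ u v, H.Adj u v → g u ≠ g v) ∧
  ∀ v x y z, H.Adj v x → H.Adj v y → H.Adj v z → g x = g y ∨ g y = g z ∨ g x = g z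

/-- Three pairwise adjacent vertices. -/
def Tri {V : Type*} (X : SimpleGraph V) (x y z : V) : Prop :=
  X.Adj x y ∧ X.Adj y z ∧ X.Adj x z

/-- The constraints satisfied by a local coloring of the categorical square of `X`. -/
def SqLoc {V : Type*} (X : SimpleGraph V) (c : V → V → ℕ) : Prop :=
  (∀ x y q r, X.Adj x y → X.Adj q r → c x q ≠ c y r) ∧
  ∀ x q x1 q1 x2 q2 x3 q3, X.Adj x x1 → X.Adj q q1 → X.Adj x x2 → X.Adj q q2 →
    X.Adj x x3 → X.Adj q q3 →
    c x1 q1 = c x2 q2 ∨ c x2 q2 = c x3 q3 ∨ c x1 q1 = c x3 q3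

lemma SqLoc.swap {V : Type*} {X : SimpleGraph V} {c : V → V → ℕ} (h : SqLoc X c) :
    SqLoc X (fun x q => c q x) := by
  refine ⟨fun x y q r h1 h2 => h.1 _ _ _ _ h2 h1, ?_⟩
  intro x q x1 q1 x2 q2 x3 q3 a1 b1 a2 b2 a3 b3
  exact h.2 _ _ _ _ _ _ _ _ b1 a1 b2 a2 b3 a3

/-- Colorings of `K₃ × K₃` are projections: abstract version with nine colors. -/
lemma nine (a00 a01 a02 a10 a11 a12 a20 a21 a22 : ℕ)
    (n1 : a00 ≠ a11) (n2 : a00 ≠ a12) (n3 : a00 ≠ a21) (n4 : a00 ≠ a22)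
    (n5 : a01 ≠ a10) (n6 : a01 ≠ a12) (n7 : a01 ≠ a20) (n8 : a01 ≠ a22)
    (n9 : a02 ≠ a10) (n10 : a02 ≠ a11) (n11 : a02 ≠ a20) (n12 : a02 ≠ a21)
    (n13 : a10 ≠ a21) (n14 : a10 ≠ a22) (n15 : a11 ≠ a20) (n16 : a11 ≠ a22)
    (n17 : a12 ≠ a20) (n18 : a12 ≠ a21)
    (l1 : a12 = a11 ∨ a12 = a22) (l1' : a21 = a11 ∨ a21 = a22)
    (l2 : a12 = a10 ∨ a12 = a22) (l2' : a20 = a10 ∨ a20 = a22)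
    (l3 : a11 = a10 ∨ a11 = a21) (l3' : a20 = a10 ∨ a20 = a21)
    (m1 : a02 = a01 ∨ a02 = a22) (m1' : a21 = a01 ∨ a21 = a22)
    (m2 : a02 = a00 ∨ a02 = a22) (m2' : a20 = a00 ∨ a20 = a22)
    (m3 : a01 = a00 ∨ a01 = a21) (m3' : a20 = a00 ∨ a20 = a21) :
    (a00 = a01 ∧ a01 = a02 ∧ a10 = a11 ∧ a11 = a12 ∧ a20 = a21 ∧ a21 = a22) ∨
    (a00 = a10 ∧ a10 = a20 ∧ a01 = a11 ∧ a11 = a21 ∧ a02 = a12 ∧ a12 = a22) := by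
  grind

section
variable {V : Type*} {X : SimpleGraph V} {c : V → V → ℕ}

lemma block (h : SqLoc X c) {x0 x1 x2 q0 q1 q2 : V} (hx : Tri X x0 x1 x2) (hq : Tri X q0 q1 q2) :
    (c x0 q0 = c x0 q1 ∧ c x0 q1 = c x0 q2 ∧ c x1 q0 = c x1 q1 ∧ c x1 q1 = c x1 q2 ∧
      c x2 q0 = c x2 q1 ∧ c x2 q1 = c x2 q2) ∨
    (c x0 q0 = c x1 q0 ∧ c x1 q0 = c x2 q0 ∧ c x0 q1 = c x1 q1 ∧ c x1 q1 = c x2 q1 ∧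
      c x0 q2 = c x1 q2 ∧ c x1 q2 = c x2 q2) := by
  obtain ⟨p, l⟩ := h
  obtain ⟨a, b, d⟩ := hx
  obtain ⟨e, f, g⟩ := hq
  have key : ∀ x q x1 q1 x2 q2 y r, X.Adj x x1 → X.Adj q q1 → X.Adj x x2 → X.Adj q q2 →
      X.Adj x y → X.Adj q r → X.Adj x1 x2 → X.Adj q1 q2 → c y r = c x1 q1 ∨ c y r = c x2 q2 := by
    intro x q x1 q1 x2 q2 y r h1 h2 h3 h4 h5 h6 h7 h8
    have := l x q x1 q1 x2 q2 y r h1 h2 h3 h4 h5 h6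
    have := p x1 x2 q1 q2 h7 h8
    grind
  apply nine
  all_goals first
    | (apply p <;> first | assumption | (apply SimpleGraph.Adj.symm; assumption))
    | skip
  · exact key x0 q0 x1 q1 x2 q2 x1 q2 a e d g a g b f
  · exact key x0 q0 x1 q1 x2 q2 x2 q1 a e d g d e b f
  · exact key x0 q1 x1 q0 x2 q2 x1 q2 a e.symm d f a f b g
  · exact key x0 q1 x1 q0 x2 q2 x2 q0 a e.symm d f d e.symm b g
  · exact key x0 q2 x1 q0 x2 q1 x1 q1 a g.symm d f.symm a f.symm b e
  · exact key x0 q2 x1 q0 x2 q1 x2 q0 a g.symm d f.symm d g.symm b e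
  · exact key x1 q0 x0 q1 x2 q2 x0 q2 a.symm e b g a.symm g d f
  · exact key x1 q0 x0 q1 x2 q2 x2 q1 a.symm e b g b e d f
  · exact key x1 q1 x0 q0 x2 q2 x0 q2 a.symm e.symm b f a.symm f d g
  · exact key x1 q1 x0 q0 x2 q2 x2 q0 a.symm e.symm b f b e.symm d g
  · exact key x1 q2 x0 q0 x2 q1 x0 q1 a.symm g.symm b f.symm a.symm f.symm d e
  · exact key x1 q2 x0 q0 x2 q1 x2 q0 a.symm g.symm b f.symm b g.symm d e

/-- Dichotomy at a vertex `x` and a triangle. -/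
def CT (c : V → V → ℕ) (x q0 q1 q2 : V) : Prop := c x q0 = c x q1 ∧ c x q1 = c x q2

lemma edgeStep (h : SqLoc X c) (tri : ∀ v, ∃ y z, Tri X v y z) {q0 q1 q2 : V}
    (hq : Tri X q0 q1 q2) {x y : V} (hxy : X.Adj x y) :
    (CT c x q0 q1 q2 ∧ CT c y q0 q1 q2) ∨
    (¬ CT c x q0 q1 q2 ∧ ¬ CT c y q0 q1 q2 ∧ c x q0 = c y q0 ∧ c x q1 = c y q1 ∧
      c x q2 = c y q2) := by
  obtain ⟨x1, x2, hx⟩ := tri x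
  obtain ⟨y1, y2, hy⟩ := tri y
  have bx := block h hx hq
  have bY := block h hy hq
  obtain ⟨p, l⟩ := h
  obtain ⟨a, b, d⟩ := hx
  obtain ⟨a', b', d'⟩ := hy
  obtain ⟨e, f, g⟩ := hq
  have key : ∀ x q x1 q1 x2 q2 y r, X.Adj x x1 → X.Adj q q1 → X.Adj x x2 → X.Adj q q2 →
      X.Adj x y → X.Adj q r → X.Adj x1 x2 → X.Adj q1 q2 → c y r = c x1 q1 ∨ c y r = c x2 q2 := by
    intro x q x1 q1 x2 q2 y r h1 h2 h3 h4 h5 h6 h7 h8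
    have := l x q x1 q1 x2 q2 y r h1 h2 h3 h4 h5 h6
    have := p x1 x2 q1 q2 h7 h8
    grind
  have k1 := key x q0 x1 q1 x2 q2 y q1 a e d g hxy e b f
  have k2 := key x q0 x1 q1 x2 q2 y q2 a e d g hxy g b f
  have k3 := key x q1 x1 q0 x2 q2 y q0 a e.symm d f hxy e.symm b g
  have k4 := key x q1 x1 q0 x2 q2 y q2 a e.symm d f hxy f b g
  have k5 := key x q2 x1 q0 x2 q1 y q0 a g.symm d f.symm hxy g.symm b e
  have k6 := key x q2 x1 q0 x2 q1 y q1 a g.symm d f.symm hxy f.symm b e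
  have j1 := key y q0 y1 q1 y2 q2 x q1 a' e d' g hxy.symm e b' f
  have j2 := key y q0 y1 q1 y2 q2 x q2 a' e d' g hxy.symm g b' f
  have j3 := key y q1 y1 q0 y2 q2 x q0 a' e.symm d' f hxy.symm e.symm b' g
  have n1 := p x y q0 q1 hxy e
  have n2 := p x y q0 q2 hxy g
  have n3 := p x y q1 q0 hxy e.symm
  have n4 := p x y q1 q2 hxy f
  have n5 := p x y q2 q0 hxy g.symm
  have n6 := p x y q2 q1 hxy f.symm
  have u1 := p x x1 q0 q1 a e
  have u2 := p x x1 q0 q2 a g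
  have u3 := p x x1 q1 q2 a f
  have v1 := p y y1 q0 q1 a' e
  have v2 := p y y1 q0 q2 a' g
  have v3 := p y y1 q1 q2 a' f
  have w1 := p x x2 q0 q1 d e
  have w2 := p y y2 q0 q1 d' e
  have w3 := p x1 x2 q0 q1 b e
  have w4 := p y1 y2 q0 q1 b' e
  unfold CT
  rcases bx with bx | bx <;> rcases bY with bY | bY
  · left; exact ⟨⟨bx.1, bx.2.1⟩, bY.1, bY.2.1⟩
  · exfalso; grind
  · exfalso; grind
  · right; grind

lemma globalStep (h : SqLoc X c) (con : X.Preconnected) (tri : ∀ v, ∃ y z, Tri X v y z)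
    {q0 q1 q2 : V} (hq : Tri X q0 q1 q2) :
    (∀ x, CT c x q0 q1 q2) ∨
    (∀ x y, c x q0 = c y q0 ∧ c x q1 = c y q1 ∧ c x q2 = c y q2) := by
  by_cases hh : ∀ x, CT c x q0 q1 q2
  · exact Or.inl hh
  right
  push Not at hh
  obtain ⟨x, hx⟩ := hh
  have main : ∀ y, ¬ CT c y q0 q1 q2 ∧ c x q0 = c y q0 ∧ c x q1 = c y q1 ∧ c x q2 = c y q2 := by
    intro y
    obtain ⟨w⟩ := con x y
    induction w with
    | nil => exact ⟨hx, rfl, rfl, rfl⟩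
    | cons hadj w ih =>
      rcases edgeStep h tri hq hadj with h1 | h1
      · exact absurd h1.1 hx
      · have := ih h1.2.1
        exact ⟨this.1, h1.2.2.1.trans this.2.1, h1.2.2.2.1.trans this.2.2.1,
          h1.2.2.2.2.trans this.2.2.2⟩
  intro y z
  have h1 := main y
  have h2 := main z
  exact ⟨h1.2.1.symm.trans h2.2.1, h1.2.2.1.symm.trans h2.2.2.1, h1.2.2.2.symm.trans h2.2.2.2⟩

lemma projection [Nonempty V] (h : SqLoc X c) (con : X.Preconnected)
    (tri : ∀ v, ∃ y z, Tri X v y z) :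
    (∀ x q r, c x q = c x r) ∨ (∀ x y q, c x q = c y q) := by
  -- a triangle cannot be constant in both directions
  have no : ∀ x0 x1 x2 q0 q1 q2, Tri X x0 x1 x2 → Tri X q0 q1 q2 →
      (∀ x, CT c x q0 q1 q2) → (∀ q, CT (fun x q => c q x) q x0 x1 x2) → False := by
    intro x0 x1 x2 q0 q1 q2 hx hq h1 h2
    have := h.1 x0 x1 q0 q1 hx.1 hq.1
    have e1 := (h1 x0).1
    have e2 := (h2 q1).1
    simp only at e2
    exact this (e1.trans e2)
  obtain ⟨s0⟩ := ‹Nonempty V›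
  obtain ⟨s1, s2, hs⟩ := tri s0
  rcases globalStep h.swap con tri hs with h0 | h0
  · right
    intro x y q
    obtain ⟨q1, q2, hq⟩ := tri q
    rcases globalStep h con tri hq with h1 | h1
    · exact (no _ _ _ _ _ _ hs hq h1 h0).elim
    · exact (h1 x y).1
  · left
    intro x q r
    obtain ⟨x1, x2, hx⟩ := tri x
    rcases globalStep h.swap con tri hx with h1 | h1
    · exfalso
      refine no _ _ _ _ _ _ hx hs ?_ h1
      rcases globalStep h con tri hs with h2 | h2
      · exact h2
      · exfalso
        have e1 := (h0 s0 s1).1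
        have e2 := (h2 s0 s1).2.1
        exact h.1 s0 s1 s0 s1 hs.1 hs.1 (e1.trans e2)
    · exact (h1 q r).1

end

/-- The color of a vertex of the universal graph `U(5,3)`. -/
def uc : Fin 30 → Fin 5 :=
  ![0,1,2, 0,1,3, 0,1,4, 0,2,3, 0,2,4, 0,3,4, 1,2,3, 1,2,4, 1,3,4, 2,3,4]

/-- The palette of a vertex. -/
def up (v : Fin 30) (k : Fin 5) : Bool :=
  (uc ⟨3 * (v.1 / 3), by omega⟩ == k) || (uc ⟨3 * (v.1 / 3) + 1, by omega⟩ == k) ||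
  (uc ⟨3 * (v.1 / 3) + 2, by omega⟩ == k)

/-- Boolean adjacency of `U(5,3)`. -/
def ua (v w : Fin 30) : Bool := (uc v != uc w) && up v (uc w) && up w (uc v)

/-- The universal graph `U(5,3)`. -/
def UX : SimpleGraph (Fin 30) where
  Adj v w := ua v w = true
  symm := ⟨by
    intro v w h
    simp only [ua, Bool.and_eq_true, bne_iff_ne] at h ⊢
    exact ⟨⟨h.1.1.symm, h.2⟩, h.1.2⟩⟩
  loopless := ⟨by
    intro v h
    simp [ua] at h⟩


lemma ua_tri : ∀ v : Fin 30, ∃ y z, ua v y = true ∧ ua y z = true ∧ ua v z = true := by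
  decide +kernel

lemma UX_tri (v : Fin 30) : ∃ y z, Tri UX v y z := ua_tri v

lemma ua_step : ∀ v : Fin 30, v ≠ 0 → ∃ w : Fin 30, w < v ∧ ua v w = true := by
  decide +kernel

lemma UX_reach (n : ℕ) : ∀ v : Fin 30, v.1 = n → UX.Reachable v 0 := by
  induction n using Nat.strong_induction_on with
  | _ n ih =>
    intro v hv
    by_cases h0 : v = 0
    · subst h0; exact SimpleGraph.Reachable.refl _
    · obtain ⟨w, hw, ha⟩ := ua_step v h0
      have ha' : UX.Adj v w := ha
      exact ha'.reachable.trans (ih w.1 (by rw [← hv]; exact hw) w rfl)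

lemma UX_con : UX.Preconnected := fun v w =>
  (UX_reach _ v rfl).trans (UX_reach _ w rfl).symm

/-- `U(5,3)` with the extra edge joining vertices `0` and `18` has no local coloring. -/
lemma no_loc (g : Fin 30 → ℕ) (p : ∀ x y, UX.Adj x y → g x ≠ g y) (p0 : g 0 ≠ g 18)
    (l : ∀ v x y z, UX.Adj v x → UX.Adj v y → UX.Adj v z → g x = g y ∨ g y = g z ∨ g x = g z)
    (l0 : ∀ x y, UX.Adj 0 x → UX.Adj 0 y → g x = g y ∨ g y = g 18 ∨ g x = g 18)
    (l1 : ∀ x y, UX.Adj 18 x → UX.Adj 18 y → g x = g y ∨ g y = g 0 ∨ g x = g 0) : False := by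
  have P : ∀ x y, ua x y = true → g x ≠ g y := p
  have L : ∀ v x y z, (ua v x && ua v y && ua v z && ua x y) = true → g z = g x ∨ g z = g y := by
    intro v x y z h
    simp only [Bool.and_eq_true] at h
    have h1 := l v x y z h.1.1.1 h.1.1.2 h.1.2
    have h2 := P x y h.2
    grind
  have E0 : g 18 = g 1 ∨ g 18 = g 2 := by
    have h1 := l0 1 2 (show ua 0 1 = true by decide) (show ua 0 2 = true by decide)
    have h2 := P 1 2 (by decide)
    grind
  have E1 : g 0 = g 19 ∨ g 0 = g 20 := by
    have h1 := l1 19 20 (show ua 18 19 = true by decide) (show ua 18 20 = true by decide)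
    have h2 := P 19 20 (by decide)
    grind
  clear l l0 l1 p
  have e1 : g 18 = g 1 := by
    have k := (L 2 0 1 18 (by decide))
    have d := p0
    grind
  have e2 : g 1 = g 4 := by
    have k := (L 3 4 5 1 (by decide))
    have d := (P 5 18 (by decide))
    grind
  rcases (L 0 1 2 7 (by decide)) with h | h
  · have b7252 : g 7 = g 1 := h
    have e2087 : g 1 = g 21 := by
      have k := (L 22 21 23 1 (by decide))
      have d := (P 7 23 (by decide))
      grind
    have e2088 : g 4 = g 24 := by
      have k := (L 25 24 26 4 (by decide))
      have d := (P 21 26 (by decide))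
      grind
    rcases (L 9 10 11 13 (by decide)) with h | h
    · have b7233 : g 13 = g 10 := h
      have e3579 : g 10 = g 27 := by
        have k := (L 28 27 29 10 (by decide))
        have d := (P 13 29 (by decide))
        grind
      rcases (L 0 1 2 10 (by decide)) with h | h
      · have b5050 : g 10 = g 1 := h
        have e5032 : g 9 = g 0 := by
          have k := (L 2 0 1 9 (by decide))
          have d := (P 9 13 (by decide))
          grind
        have e5033 : g 0 = g 3 := by
          have k := (L 4 3 5 0 (by decide))
          have d := (P 5 9 (by decide))
          grind
        have e5034 : g 2 = g 11 := by
          have k := (L 9 10 11 2 (by decide))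
          have d := (P 2 21 (by decide))
          grind
        have e5035 : g 19 = g 0 := by
          have k := (L 1 0 2 19 (by decide))
          have d := (P 11 19 (by decide))
          grind
        have e5036 : g 12 = g 0 := by
          have k := (L 2 0 1 12 (by decide))
          have d := (P 12 13 (by decide))
          grind
        have e5037 : g 0 = g 6 := by
          have k := (L 7 6 8 0 (by decide))
          have d := (P 8 12 (by decide))
          grind
        have e5038 : g 2 = g 14 := by
          have k := (L 12 13 14 2 (by decide))
          have d := (P 11 27 (by decide))
          grind
        have e5039 : g 22 = g 0 := by
          have k := (L 1 0 2 22 (by decide))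
          have d := (P 14 22 (by decide))
          grind
        have e5040 : g 2 = g 20 := by
          have k := (L 18 19 20 2 (by decide))
          have d := (P 14 22 (by decide))
          grind
        have e5041 : g 2 = g 23 := by
          have k := (L 21 22 23 2 (by decide))
          have d := (P 19 20 (by decide))
          grind
        have e5042 : g 11 = g 5 := by
          have k := (L 3 4 5 11 (by decide))
          have d := (P 23 27 (by decide))
          grind
        have e5043 : g 3 = g 15 := by
          have k := (L 16 15 17 3 (by decide))
          have d := (P 12 17 (by decide))
          grind
        have e5044 : g 14 = g 8 := by
          have k := (L 6 7 8 14 (by decide))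
          have d := (P 23 27 (by decide))
          grind
        have e5045 : g 28 = g 11 := by
          have k := (L 10 9 11 28 (by decide))
          have d := (P 19 28 (by decide))
          grind
        have e5046 : g 5 = g 16 := by
          have k := (L 15 16 17 5 (by decide))
          have d := (P 17 28 (by decide))
          grind
        have e5047 : g 5 = g 25 := by
          have k := (L 24 25 26 5 (by decide))
          have d := (P 26 28 (by decide))
          grind
        have e5048 : g 17 = g 7 := by
          have k := (L 6 7 8 17 (by decide))
          have d := (P 17 28 (by decide))
          grind
        have e5049 : g 26 = g 6 := by
          have k := (L 7 6 8 26 (by decide))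
          have d := (P 26 28 (by decide))
          grind
        have k := (L 13 12 14 29 (by decide))
        have d1 := (P 22 29 (by decide))
        have d2 := (P 28 29 (by decide))
        grind
      · have b7232 : g 10 = g 2 := h
        have e5051 : g 2 = g 19 := by
          have k := (L 18 19 20 2 (by decide))
          have d := (P 20 27 (by decide))
          grind
        have e5052 : g 2 = g 22 := by
          have k := (L 21 22 23 2 (by decide))
          have d := (P 23 27 (by decide))
          grind
        have e5053 : g 0 = g 20 := by
          have k := E1
          have d := (P 0 13 (by decide))
          grind
        rcases (L 7 6 8 3 (by decide)) with h | h
        · have b7220 : g 3 = g 6 := h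
          have e5917 : g 3 = g 15 := by
            have k := (L 16 15 17 3 (by decide))
            have d := (P 6 17 (by decide))
            grind
          rcases (L 4 3 5 0 (by decide)) with h | h
          · have b7210 : g 0 = g 3 := h
            have e6691 : g 0 = g 9 := by
              have k := (L 10 9 11 0 (by decide))
              have d := (P 11 15 (by decide))
              grind
            have e6692 : g 0 = g 12 := by
              have k := (L 13 12 14 0 (by decide))
              have d := (P 14 15 (by decide))
              grind
            have e6693 : g 5 = g 19 := by
              have k := (L 18 19 20 5 (by decide))
              have d := (P 5 15 (by decide))
              grind
            have e6694 : g 11 = g 4 := by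
              have k := (L 3 4 5 11 (by decide))
              have d := (P 11 27 (by decide))
              grind
            rcases (L 3 4 5 16 (by decide)) with h | h
            · have b7202 : g 16 = g 4 := h
              have e7195 : g 5 = g 17 := by
                have k := (L 15 16 17 5 (by decide))
                have d := (P 21 22 (by decide))
                grind
              have e7196 : g 25 = g 3 := by
                have k := (L 4 3 5 25 (by decide))
                have d := (P 17 25 (by decide))
                grind
              have e7197 : g 5 = g 26 := by
                have k := (L 24 25 26 5 (by decide))
                have d := (P 20 27 (by decide))
                grind
              have e7198 : g 17 = g 8 := by
                have k := (L 6 7 8 17 (by decide))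
                have d := (P 24 26 (by decide))
                grind
              have e7199 : g 14 = g 7 := by
                have k := (L 6 7 8 14 (by decide))
                have d := (P 14 27 (by decide))
                grind
              have e7200 : g 23 = g 6 := by
                have k := (L 7 6 8 23 (by decide))
                have d := (P 23 27 (by decide))
                grind
              have e7201 : g 11 = g 28 := by
                have k := (L 27 28 29 11 (by decide))
                have d := (P 16 29 (by decide))
                grind
              have k := (L 13 12 14 29 (by decide))
              have d1 := (P 25 29 (by decide))
              have d2 := (P 28 29 (by decide))
              grind
            · have b7209 : g 16 = g 5 := h
              have e7203 : g 5 = g 25 := by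
                have k := (L 24 25 26 5 (by decide))
                have d := (P 16 26 (by decide))
                grind
              have e7204 : g 11 = g 17 := by
                have k := (L 15 16 17 11 (by decide))
                have d := (P 24 25 (by decide))
                grind
              have e7205 : g 8 = g 16 := by
                have k := (L 15 16 17 8 (by decide))
                have d := (P 8 24 (by decide))
                grind
              have e7206 : g 14 = g 7 := by
                have k := (L 6 7 8 14 (by decide))
                have d := (P 14 27 (by decide))
                grind
              have e7207 : g 23 = g 6 := by
                have k := (L 7 6 8 23 (by decide))
                have d := (P 23 27 (by decide))
                grind
              have e7208 : g 26 = g 6 := by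
                have k := (L 7 6 8 26 (by decide))
                have d := (P 25 26 (by decide))
                grind
              have k := (L 10 9 11 28 (by decide))
              have d1 := (P 26 28 (by decide))
              have d2 := (P 17 28 (by decide))
              grind
          · have b7219 : g 0 = g 5 := h
            have e7211 : g 0 = g 8 := by
              have k := (L 7 6 8 0 (by decide))
              have d := (P 5 15 (by decide))
              grind
            have e7212 : g 0 = g 11 := by
              have k := (L 10 9 11 0 (by decide))
              have d := (P 5 9 (by decide))
              grind
            have e7213 : g 0 = g 14 := by
              have k := (L 13 12 14 0 (by decide))
              have d := (P 8 12 (by decide))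
              grind
            have e7214 : g 3 = g 2 := by
              have k := (L 1 0 2 3 (by decide))
              have d := (P 14 15 (by decide))
              grind
            have e7215 : g 9 = g 1 := by
              have k := (L 2 0 1 9 (by decide))
              have d := (P 9 11 (by decide))
              grind
            have e7216 : g 12 = g 1 := by
              have k := (L 2 0 1 12 (by decide))
              have d := (P 12 14 (by decide))
              grind
            have e7217 : g 16 = g 5 := by
              have k := (L 3 4 5 16 (by decide))
              have d := (P 9 16 (by decide))
              grind
            have e7218 : g 5 = g 25 := by
              have k := (L 24 25 26 5 (by decide))
              have d := (P 16 26 (by decide))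
              grind
            have k := (L 6 7 8 17 (by decide))
            have d1 := (P 12 17 (by decide))
            have d2 := (P 17 25 (by decide))
            grind
        · have b7231 : g 3 = g 8 := h
          have e7221 : g 3 = g 17 := by
            have k := (L 16 15 17 3 (by decide))
            have d := (P 8 15 (by decide))
            grind
          have e7222 : g 6 = g 5 := by
            have k := (L 4 3 5 6 (by decide))
            have d := (P 6 17 (by decide))
            grind
          have e7223 : g 25 = g 5 := by
            have k := (L 4 3 5 25 (by decide))
            have d := (P 17 25 (by decide))
            grind
          have e7224 : g 15 = g 4 := by
            have k := (L 5 3 4 15 (by decide))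
            have d := (P 15 17 (by decide))
            grind
          have e7225 : g 11 = g 5 := by
            have k := (L 3 4 5 11 (by decide))
            have d := (P 11 15 (by decide))
            grind
          have e7226 : g 6 = g 0 := by
            have k := (L 1 0 2 6 (by decide))
            have d := (P 11 27 (by decide))
            grind
          have e7227 : g 0 = g 12 := by
            have k := (L 13 12 14 0 (by decide))
            have d := (P 6 14 (by decide))
            grind
          have e7228 : g 3 = g 2 := by
            have k := (L 1 0 2 3 (by decide))
            have d := (P 17 25 (by decide))
            grind
          have e7229 : g 9 = g 1 := by
            have k := (L 2 0 1 9 (by decide))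
            have d := (P 9 11 (by decide))
            grind
          have e7230 : g 16 = g 5 := by
            have k := (L 3 4 5 16 (by decide))
            have d := (P 15 16 (by decide))
            grind
          have k := (L 6 7 8 14 (by decide))
          have d1 := (P 14 15 (by decide))
          have d2 := (P 14 27 (by decide))
          grind
    · have b7251 : g 13 = g 11 := h
      have e7234 : g 0 = g 9 := by
        have k := (L 10 9 11 0 (by decide))
        have d := (P 0 13 (by decide))
        grind
      have e7235 : g 0 = g 3 := by
        have k := (L 4 3 5 0 (by decide))
        have d := (P 5 9 (by decide))
        grind
      have e7236 : g 12 = g 9 := by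
        have k := (L 10 9 11 12 (by decide))
        have d := (P 12 13 (by decide))
        grind
      have e7237 : g 0 = g 6 := by
        have k := (L 7 6 8 0 (by decide))
        have d := (P 8 12 (by decide))
        grind
      have e7238 : g 3 = g 15 := by
        have k := (L 16 15 17 3 (by decide))
        have d := (P 12 17 (by decide))
        grind
      have e7239 : g 10 = g 14 := by
        have k := (L 12 13 14 10 (by decide))
        have d := (P 10 11 (by decide))
        grind
      have e7240 : g 10 = g 29 := by
        have k := (L 28 27 29 10 (by decide))
        have d := (P 14 27 (by decide))
        grind
      have e7241 : g 16 = g 11 := by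
        have k := (L 9 10 11 16 (by decide))
        have d := (P 16 29 (by decide))
        grind
      have e7242 : g 27 = g 9 := by
        have k := (L 11 9 10 27 (by decide))
        have d := (P 27 29 (by decide))
        grind
      have e7243 : g 20 = g 5 := by
        have k := (L 4 3 5 20 (by decide))
        have d := (P 20 27 (by decide))
        grind
      have e7244 : g 5 = g 11 := by
        have k := (L 9 10 11 5 (by decide))
        have d := (P 10 20 (by decide))
        grind
      have e7245 : g 13 = g 2 := by
        have k := (L 0 1 2 13 (by decide))
        have d := (P 20 24 (by decide))
        grind
      have e7246 : g 10 = g 1 := by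
        have k := (L 0 1 2 10 (by decide))
        have d := (P 16 29 (by decide))
        grind
      have e7247 : g 19 = g 0 := by
        have k := (L 1 0 2 19 (by decide))
        have d := (P 19 20 (by decide))
        grind
      have e7248 : g 2 = g 22 := by
        have k := (L 21 22 23 2 (by decide))
        have d := (P 13 23 (by decide))
        grind
      have e7249 : g 5 = g 25 := by
        have k := (L 24 25 26 5 (by decide))
        have d := (P 16 26 (by decide))
        grind
      have e7250 : g 23 = g 8 := by
        have k := (L 7 6 8 23 (by decide))
        have d := (P 23 27 (by decide))
        grind
      have k := (L 12 13 14 8 (by decide))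
      have d1 := (P 22 23 (by decide))
      have d2 := (P 23 24 (by decide))
      grind
  · have b7270 : g 7 = g 2 := h
    have e7253 : g 3 = g 0 := by
      have k := (L 1 0 2 3 (by decide))
      have d := (P 3 7 (by decide))
      grind
    have e7254 : g 0 = g 9 := by
      have k := (L 10 9 11 0 (by decide))
      have d := (P 3 11 (by decide))
      grind
    have e7255 : g 6 = g 0 := by
      have k := (L 1 0 2 6 (by decide))
      have d := (P 6 7 (by decide))
      grind
    have e7256 : g 0 = g 12 := by
      have k := (L 13 12 14 0 (by decide))
      have d := (P 6 14 (by decide))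
      grind
    have e7257 : g 1 = g 8 := by
      have k := (L 6 7 8 1 (by decide))
      have d := (P 2 18 (by decide))
      grind
    have e7258 : g 1 = g 23 := by
      have k := (L 22 21 23 1 (by decide))
      have d := (P 8 21 (by decide))
      grind
    have e7259 : g 13 = g 2 := by
      have k := (L 0 1 2 13 (by decide))
      have d := (P 13 23 (by decide))
      grind
    have e7260 : g 21 = g 0 := by
      have k := (L 2 0 1 21 (by decide))
      have d := (P 21 23 (by decide))
      grind
    have e7261 : g 19 = g 2 := by
      have k := (L 1 0 2 19 (by decide))
      have d := (P 19 21 (by decide))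
      grind
    have e7262 : g 22 = g 2 := by
      have k := (L 1 0 2 22 (by decide))
      have d := (P 21 22 (by decide))
      grind
    have e7263 : g 2 = g 10 := by
      have k := (L 9 10 11 2 (by decide))
      have d := (P 11 19 (by decide))
      grind
    have e7264 : g 7 = g 5 := by
      have k := (L 3 4 5 7 (by decide))
      have d := (P 22 23 (by decide))
      grind
    have e7265 : g 11 = g 4 := by
      have k := (L 3 4 5 11 (by decide))
      have d := (P 11 19 (by decide))
      grind
    have e7266 : g 3 = g 15 := by
      have k := (L 16 15 17 3 (by decide))
      have d := (P 12 17 (by decide))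
      grind
    have e7267 : g 20 = g 3 := by
      have k := (L 4 3 5 20 (by decide))
      have d := (P 19 20 (by decide))
      grind
    have e7268 : g 4 = g 26 := by
      have k := (L 25 24 26 4 (by decide))
      have d := (P 23 24 (by decide))
      grind
    have e7269 : g 16 = g 5 := by
      have k := (L 3 4 5 16 (by decide))
      have d := (P 16 26 (by decide))
      grind
    have k := (L 5 3 4 24 (by decide))
    have d1 := (P 20 24 (by decide))
    have d2 := (P 24 26 (by decide))
    grind

/-- One-way adjacency: arcs of `U(5,3)` together with the arc from `0` to `18`. -/
def ub (v w : Fin 30) : Bool := ua v w || (v == 0 && w == 18)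

lemma ub_two : ∀ v : Fin 30, ∃ a b : Fin 5, ∀ w, ub v w = true → uc w = a ∨ uc w = b := by
  decide +kernel

lemma ub_proper : ∀ v w : Fin 30, ub v w = true → uc v ≠ uc w := by
  decide +kernel

lemma dir_le {W : Type*} [Fintype W] (D : W → W → Prop) (f : W → Fin 30)
    (h : ∀ s t, D s t → ub (f s) (f t) = true) : dirLocalChrom D ≤ 3 := by
  let c : W → ℕ := fun s => (uc (f s)).1
  have hsup : Finset.univ.sup (fun v => (c '' {u | D v u}).ncard) ≤ 2 := by
    apply Finset.sup_le
    intro v _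
    obtain ⟨a, b, hab⟩ := ub_two (f v)
    have hsub : c '' {u | D v u} ⊆ {a.1, b.1} := by
      rintro _ ⟨t, ht, rfl⟩
      rcases hab _ (h v t ht) with h1 | h1
      · left; simp [c, h1]
      · right; simp [c, h1]
    exact (Set.ncard_le_ncard hsub (Set.toFinite _)).trans (by
      have := Set.ncard_insert_le a.1 {b.1}
      rw [Set.ncard_singleton] at this
      exact this)
  have hmem : Finset.univ.sup (fun v => (c '' {u | D v u}).ncard) + 1 ∈
      {n | ∃ c : W → ℕ, (∀ u v, (underlying D).Adj u v → c u ≠ c v) ∧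
        n = Finset.univ.sup (fun v => (c '' {u | D v u}).ncard) + 1} := by
    refine ⟨c, ?_, rfl⟩
    intro u v huv hc
    rw [underlying, SimpleGraph.fromRel_adj] at huv
    have hc' : uc (f u) = uc (f v) := Fin.ext hc
    rcases huv.2 with h1 | h1
    · exact ub_proper _ _ (h _ _ h1) hc'
    · exact ub_proper _ _ (h _ _ h1) hc'.symm
  have := Nat.sInf_le hmem
  unfold dirLocalChrom
  omega

lemma loc_ge {W : Type*} [Fintype W] (G : SimpleGraph W) (h : ∀ g, ¬ IsLoc G g) :
    4 ≤ localChrom G := by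
  have hne : {n | ∃ c : W → ℕ, (∀ u v, G.Adj u v → c u ≠ c v) ∧
      n = Finset.univ.sup (fun v => (c '' {u | G.Adj v u}).ncard) + 1}.Nonempty := by
    refine ⟨_, fun w => (Fintype.equivFin W w).1, ?_, rfl⟩
    intro u v huv hc
    exact huv.ne ((Fintype.equivFin W).injective (Fin.ext hc))
  obtain ⟨c, hc, hn⟩ := Nat.sInf_mem hne
  by_contra hlt
  have hsup : Finset.univ.sup (fun v => (c '' {u | G.Adj v u}).ncard) ≤ 2 := by
    unfold localChrom at hlt
    omega
  refine h c ⟨hc, ?_⟩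
  intro v x y z hx hy hz
  by_contra hcon
  push Not at hcon
  have h1 : (c '' {u | G.Adj v u}).ncard ≤ 2 :=
    (Finset.le_sup (f := fun v => (c '' {u | G.Adj v u}).ncard) (Finset.mem_univ v)).trans hsup
  have h2 : ({c x, c y, c z} : Set ℕ) ⊆ c '' {u | G.Adj v u} := by
    rintro k (rfl | rfl | rfl)
    · exact ⟨x, hx, rfl⟩
    · exact ⟨y, hy, rfl⟩
    · exact ⟨z, hz, rfl⟩
  have h3 := Set.ncard_le_ncard h2 (Set.toFinite _)
  have h4 : ({c x, c y, c z} : Set ℕ).ncard = 3 :=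
    Set.ncard_eq_three.mpr ⟨_, _, _, hcon.1, hcon.2.2, hcon.2.1, rfl⟩
  omega

/-- The categorical square of `U(5,3)` with one extra edge. -/
def GG : SimpleGraph (Fin 30 × Fin 30) where
  Adj s t := (UX.Adj s.1 t.1 ∧ UX.Adj s.2 t.2) ∨ (s = (0, 18) ∧ t = (18, 0)) ∨
    (s = (18, 0) ∧ t = (0, 18))
  symm := ⟨by
    rintro s t (h | h | h)
    · exact Or.inl ⟨h.1.symm, h.2.symm⟩
    · exact Or.inr (Or.inr ⟨h.2, h.1⟩)
    · exact Or.inr (Or.inl ⟨h.2, h.1⟩)⟩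
  loopless := ⟨by
    rintro s (h | h | h)
    · exact h.1.ne rfl
    · exact absurd (h.1.symm.trans h.2) (by decide)
    · exact absurd (h.1.symm.trans h.2) (by decide)⟩

lemma GG_no_loc (g : Fin 30 × Fin 30 → ℕ) : ¬ IsLoc GG g := by
  rintro ⟨p, l⟩
  have e0 : GG.Adj (0, 18) (18, 0) := Or.inr (Or.inl ⟨rfl, rfl⟩)
  have sq : SqLoc UX (fun x q => g (x, q)) := by
    refine ⟨fun x y q r h1 h2 => p _ _ (Or.inl ⟨h1, h2⟩), ?_⟩
    intro x q x1 q1 x2 q2 x3 q3 a1 b1 a2 b2 a3 b3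
    exact l (x, q) (x1, q1) (x2, q2) (x3, q3) (Or.inl ⟨a1, b1⟩) (Or.inl ⟨a2, b2⟩)
      (Or.inl ⟨a3, b3⟩)
  have nb : ∀ q, ∃ r, UX.Adj q r := fun q => by
    obtain ⟨y, _, h⟩ := UX_tri q
    exact ⟨y, h.1⟩
  rcases projection sq UX_con UX_tri with h | h
  · have h' : ∀ x q, g (x, q) = g (x, 0) := fun x q => h x q 0
    refine no_loc (fun x => g (x, 0)) ?_ ?_ ?_ ?_ ?_
    · intro x y hxy
      obtain ⟨r, hr⟩ := nb 0
      have := p (x, 0) (y, r) (Or.inl ⟨hxy, hr⟩)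
      rwa [h' y r] at this
    · have := p _ _ e0
      rwa [h' 0 18] at this
    · intro v x y z hx hy hz
      obtain ⟨r, hr⟩ := nb 0
      have := l (v, 0) (x, r) (y, r) (z, r) (Or.inl ⟨hx, hr⟩) (Or.inl ⟨hy, hr⟩) (Or.inl ⟨hz, hr⟩)
      rwa [h' x r, h' y r, h' z r] at this
    · intro x y hx hy
      obtain ⟨r, hr⟩ := nb 18
      have := l (0, 18) (x, r) (y, r) (18, 0) (Or.inl ⟨hx, hr⟩) (Or.inl ⟨hy, hr⟩) e0
      rwa [h' x r, h' y r] at this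
    · intro x y hx hy
      obtain ⟨r, hr⟩ := nb 0
      have := l (18, 0) (x, r) (y, r) (0, 18) (Or.inl ⟨hx, hr⟩) (Or.inl ⟨hy, hr⟩) e0.symm
      rwa [h' x r, h' y r, h' 0 18] at this
  · have h' : ∀ x q, g (x, q) = g (0, q) := fun x q => h x 0 q
    refine no_loc (fun q => g (0, q)) ?_ ?_ ?_ ?_ ?_
    · intro x y hxy
      obtain ⟨r, hr⟩ := nb 0
      have := p (0, x) (r, y) (Or.inl ⟨hr, hxy⟩)
      rwa [h' r y] at this
    · have := p _ _ e0.symm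
      rwa [h' 18 0] at this
    · intro v x y z hx hy hz
      obtain ⟨r, hr⟩ := nb 0
      have := l (0, v) (r, x) (r, y) (r, z) (Or.inl ⟨hr, hx⟩) (Or.inl ⟨hr, hy⟩) (Or.inl ⟨hr, hz⟩)
      rwa [h' r x, h' r y, h' r z] at this
    · intro x y hx hy
      obtain ⟨r, hr⟩ := nb 18
      have := l (18, 0) (r, x) (r, y) (0, 18) (Or.inl ⟨hr, hx⟩) (Or.inl ⟨hr, hy⟩) e0.symm
      rwa [h' r x, h' r y] at this
    · intro x y hx hy
      obtain ⟨r, hr⟩ := nb 0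
      have := l (0, 18) (r, x) (r, y) (18, 0) (Or.inl ⟨hr, hx⟩) (Or.inl ⟨hr, hy⟩) e0
      rwa [h' r x, h' r y, h' 18 0] at this

/-- There is a finite simple graph all of whose orientations have directed local chromatic
number strictly smaller than the local chromatic number of the graph. -/
theorem stmt0 : ∃ (n : ℕ) (G : SimpleGraph (Fin n)),
    ∀ D : Fin n → Fin n → Prop, IsOrientation G D → dirLocalChrom D < localChrom G := by
  let e : Fin (30 * 30) ≃ Fin 30 × Fin 30 := finProdFinEquiv.symm
  refine ⟨30 * 30, GG.comap e, ?_⟩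
  intro D hD
  have h4 : 4 ≤ localChrom (GG.comap e) := by
    apply loc_ge
    rintro g ⟨p, l⟩
    refine GG_no_loc (fun s => g (e.symm s)) ⟨?_, ?_⟩
    · intro s t hst
      exact p _ _ (by simpa using hst)
    · intro v x y z hx hy hz
      exact l (e.symm v) _ _ _ (by simpa using hx) (by simpa using hy) (by simpa using hz)
  have h3 : dirLocalChrom D ≤ 3 := by
    have hadj : ∀ s t, D s t → GG.Adj (e s) (e t) := fun s t h => hD.1 s t h
    by_cases hvu : D (e.symm (18, 0)) (e.symm (0, 18))
    · have huv : ¬ D (e.symm (0, 18)) (e.symm (18, 0)) := by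
        have := hD.2 _ _ (hD.1 _ _ hvu)
        exact this.mp hvu
      apply dir_le D (fun s => (e s).2)
      intro s t hst
      rcases hadj s t hst with h | h | h
      · have h2 : ua (e s).2 (e t).2 = true := h.2
        simp [ub, h2]
      · exfalso
        apply huv
        rw [← h.1, ← h.2]
        simpa using hst
      · rw [h.1, h.2]
        decide
    · apply dir_le D (fun s => (e s).1)
      intro s t hst
      rcases hadj s t hst with h | h | h
      · have h2 : ua (e s).1 (e t).1 = true := h.1
        simp [ub, h2]
      · rw [h.1, h.2]
        decide
      · exfalso
        apply hvu
        rw [← h.1, ← h.2]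
        simpa using hst
  omega
end

section
/- For every finite simple graph G and every vertex v₀ ∈ V(G) there exists an independent set A₀ of G containing v₀ with the following property: for every fractional coloring (x_A)_{A ∈ S(G)} of G there is a vertex v ∈ A₀ such that ∑_{A ∈ S(G) : N(v) ∩ A ≠ ∅} x_A ≥ χ*(G) − 1. -/
open Classical

/-- `A` is an independent set of the simple graph `G`. -/
def IsIndepF {V : Type*} (G : SimpleGraph V) (A : Finset V) : Prop :=
  ∀ u ∈ A, ∀ v ∈ A, ¬ G.Adj u v

/-- A fractional coloring of `G`: nonnegative weights on the independent sets of `G` such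
that the sets containing any fixed vertex have total weight at least `1`. -/
structure FracColoring {V : Type*} [Fintype V] (G : SimpleGraph V) where
  x : Finset V → ℝ
  nonneg : ∀ A, 0 ≤ x A
  supp : ∀ A, x A ≠ 0 → IsIndepF G A
  cover : ∀ v : V, 1 ≤ ∑ A : Finset V, if v ∈ A then x A else 0

/-- The total weight of a fractional coloring. -/
noncomputable def totalWeight {V : Type*} [Fintype V] {G : SimpleGraph V}
    (f : FracColoring G) : ℝ :=
  ∑ A : Finset V, f.x A

/-- The fractional chromatic number `χ*(G)`: the minimum total weight of a fractional
coloring of `G`. -/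
noncomputable def fracChrom {V : Type*} [Fintype V] (G : SimpleGraph V) : ℝ :=
  sInf {w : ℝ | ∃ f : FracColoring G, w = totalWeight f}

/-- The local weight of a fractional coloring of a digraph `D`:
`1` plus the maximum over vertices `v` of the total weight of the independent sets meeting
the out-neighborhood of `v`. -/
noncomputable def localWeight {V : Type*} [Fintype V] (D : V → V → Prop)
    (f : FracColoring (underlying D)) : ℝ :=
  1 + ⨆ v : V, ∑ A : Finset V, if ∃ u ∈ A, D v u then f.x A else 0

/-- The fractional directed local chromatic number `ψ_d*(D)`: the minimum local weight of a
fractional coloring of `D`. -/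
noncomputable def fracDirLocal {V : Type*} [Fintype V] (D : V → V → Prop) : ℝ :=
  sInf {w : ℝ | ∃ f : FracColoring (underlying D), w = localWeight D f}

lemma fracChrom_le {V : Type*} [Fintype V] {G : SimpleGraph V} (f : FracColoring G) :
    fracChrom G ≤ totalWeight f := by
  apply csInf_le
  · refine ⟨0, ?_⟩
    rintro w ⟨g, rfl⟩
    exact Finset.sum_nonneg fun A _ => g.nonneg A
  · exact ⟨f, rfl⟩

/-- Enlarge every colour class by the vertices of `A₀` that can be added to it. -/
lemma exists_augment {V : Type} [Fintype V] (G : SimpleGraph V) (A₀ : Finset V)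
    (hA₀ : IsIndepF G A₀) (f : FracColoring G) :
    ∃ g : FracColoring G, totalWeight g = totalWeight f ∧
      ∀ v ∈ A₀, totalWeight f - (∑ A : Finset V, if ∃ u ∈ A, G.Adj v u then f.x A else 0)
        ≤ ∑ A : Finset V, if v ∈ A then g.x A else 0 := by
  let aug : Finset V → Finset V := fun A => A ∪ A₀.filter (fun v => ¬ ∃ u ∈ A, G.Adj v u)
  let y : Finset V → ℝ := fun B => ∑ A : Finset V, if aug A = B then f.x A else 0
  have hy : ∀ v, (∑ B : Finset V, if v ∈ B then y B else 0)
      = ∑ A : Finset V, if v ∈ aug A then f.x A else 0 := by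
    intro v
    have h1 : ∀ B : Finset V, (if v ∈ B then y B else 0)
        = ∑ A : Finset V, if aug A = B then (if v ∈ aug A then f.x A else 0) else 0 := by
      intro B
      by_cases hB : v ∈ B
      · simp only [hB, if_true, y]
        refine Finset.sum_congr rfl fun A _ => ?_
        by_cases h : aug A = B
        · simp [h, hB]
        · simp [h]
      · simp only [hB, if_false]
        symm
        refine Finset.sum_eq_zero fun A _ => ?_
        by_cases h : aug A = B
        · simp [h, hB]
        · simp [h]
    simp_rw [h1]
    rw [Finset.sum_comm]
    simp
  refine ⟨⟨y, ?_, ?_, ?_⟩, ?_, ?_⟩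
  · intro B
    refine Finset.sum_nonneg fun A _ => ?_
    split_ifs
    · exact f.nonneg A
    · exact le_rfl
  · intro B hB
    obtain ⟨A, -, hA⟩ := Finset.exists_ne_zero_of_sum_ne_zero hB
    by_cases h : aug A = B
    · simp only [h, if_true] at hA
      have hI := f.supp A hA
      subst h
      intro u hu v hv
      simp only [aug, Finset.mem_union, Finset.mem_filter] at hu hv
      rcases hu with hu | ⟨hu, hu'⟩ <;> rcases hv with hv | ⟨hv, hv'⟩
      · exact hI u hu v hv
      · exact fun h => hv' ⟨u, hu, h.symm⟩
      · exact fun h => hu' ⟨v, hv, h⟩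
      · exact hA₀ u hu v hv
    · simp [h] at hA
  · intro v
    rw [hy]
    refine (f.cover v).trans (Finset.sum_le_sum fun A _ => ?_)
    by_cases h : v ∈ A
    · have : v ∈ aug A := Finset.mem_union_left _ h
      simp [h, this]
    · simp only [h, if_false]
      split_ifs
      · exact f.nonneg A
      · exact le_rfl
  · simp only [totalWeight, y]
    rw [Finset.sum_comm]
    simp
  · intro v hv
    change _ ≤ ∑ B : Finset V, if v ∈ B then y B else 0
    rw [hy, totalWeight, ← Finset.sum_sub_distrib]
    refine Finset.sum_le_sum fun A _ => ?_
    by_cases h : ∃ u ∈ A, G.Adj v u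
    · simp only [h, if_true, sub_self]
      split_ifs
      · exact f.nonneg A
      · exact le_rfl
    · have : v ∈ aug A := Finset.mem_union_right _ (Finset.mem_filter.2 ⟨hv, h⟩)
      simp [h, this]

/-- If `A₀` fails, colorings giving `A₀` weight at least `c` are far from optimal. -/
lemma gap {V : Type} [Fintype V] (G : SimpleGraph V) (A₀ : Finset V)
    (hA₀ : IsIndepF G A₀) (hne : A₀.Nonempty) (f : FracColoring G)
    (hf : ∀ v ∈ A₀,
      (∑ A : Finset V, if ∃ u ∈ A, G.Adj v u then f.x A else 0) < fracChrom G - 1)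
    (c : ℝ) (hc : 0 < c) :
    ∃ η > 0, ∀ x : FracColoring G, c ≤ x.x A₀ → fracChrom G + η ≤ totalWeight x := by
  obtain ⟨g, hgW, hg⟩ := exists_augment G A₀ hA₀ f
  obtain ⟨m, hm, hmax⟩ := Finset.exists_max_image A₀
    (fun v => ∑ A : Finset V, if ∃ u ∈ A, G.Adj v u then f.x A else 0) hne
  have hfm := hf m hm
  obtain ⟨e, he⟩ : ∃ e, e = fracChrom G - 1 -
    ∑ A : Finset V, if ∃ u ∈ A, G.Adj m u then f.x A else 0 := ⟨_, rfl⟩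
  have he0 : 0 < e := by linarith
  have hcov : ∀ v ∈ A₀, totalWeight g - fracChrom G + 1 + e
      ≤ ∑ A : Finset V, if v ∈ A then g.x A else 0 := by
    intro v hv
    have h1 := hg v hv
    have h2 := hmax v hv
    linarith
  have hWg := fracChrom_le g
  have hd : 0 < totalWeight g - fracChrom G + e := by linarith
  obtain ⟨t, ht⟩ : ∃ t, t = c / (totalWeight g - fracChrom G + e) := ⟨_, rfl⟩
  have ht0 : 0 < t := by rw [ht]; positivity
  have htc : t * (totalWeight g - fracChrom G + e) = c := by
    rw [ht]; field_simp
  refine ⟨t * e, by positivity, fun x hx => ?_⟩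
  have h1t : 0 < 1 + t := by linarith
  let z : Finset V → ℝ := fun B => (1 + t)⁻¹ * (x.x B - (if B = A₀ then c else 0) + t * g.x B)
  have hz : ∀ v, (∑ B : Finset V, if v ∈ B then z B else 0) = (1 + t)⁻¹ *
      ((∑ B : Finset V, if v ∈ B then x.x B else 0) - (if v ∈ A₀ then c else 0)
        + t * ∑ B : Finset V, if v ∈ B then g.x B else 0) := by
    intro v
    have h2 : (if v ∈ A₀ then c else 0)
        = ∑ B : Finset V, if B = A₀ then (if v ∈ B then c else 0) else 0 := by
      simp
    rw [h2, Finset.mul_sum, ← Finset.sum_sub_distrib, ← Finset.sum_add_distrib, Finset.mul_sum]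
    refine Finset.sum_congr rfl fun B _ => ?_
    by_cases h : v ∈ B <;> simp [h, z]
  let zc : FracColoring G := ⟨z, by
      intro B
      have h1 := x.nonneg B
      have h2 := mul_nonneg ht0.le (g.nonneg B)
      refine mul_nonneg (inv_nonneg.2 h1t.le) ?_
      split_ifs with h
      · subst h; linarith
      · linarith, by
      intro B hB
      by_cases h : B = A₀
      · subst h; exact hA₀
      by_cases h1 : x.x B = 0
      · by_cases h2 : g.x B = 0
        · exact absurd (by simp [z, h, h1, h2]) hB
        · exact g.supp B h2
      · exact x.supp B h1, by
      intro v
      rw [hz, ← div_eq_inv_mul, le_div_iff₀ h1t]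
      have h1 := x.cover v
      by_cases h : v ∈ A₀
      · have h2 := mul_le_mul_of_nonneg_left (hcov v h) ht0.le
        simp only [h, if_true]
        nlinarith
      · have h2 := mul_le_mul_of_nonneg_left (g.cover v) ht0.le
        simp only [h, if_false]
        linarith⟩
  have hzt : totalWeight zc = (1 + t)⁻¹ * (totalWeight x - c + t * totalWeight g) := by
    have h2 : c = ∑ B : Finset V, if B = A₀ then c else 0 := by simp
    conv_rhs => rw [h2]
    simp only [totalWeight]
    rw [Finset.mul_sum, ← Finset.sum_sub_distrib, ← Finset.sum_add_distrib, Finset.mul_sum]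
  have hfin := fracChrom_le zc
  rw [hzt, ← div_eq_inv_mul, le_div_iff₀ h1t] at hfin
  nlinarith

/-- For every finite simple graph `G` and vertex `v₀` there is an independent set `A₀`
containing `v₀` such that every fractional coloring of `G` has some vertex `v ∈ A₀` that
"sees" total weight at least `χ*(G) - 1`. -/
theorem stmt3 {V : Type} [Fintype V] (G : SimpleGraph V) (v₀ : V) :
    ∃ A₀ : Finset V, IsIndepF G A₀ ∧ v₀ ∈ A₀ ∧
      ∀ f : FracColoring G, ∃ v ∈ A₀,
        fracChrom G - 1 ≤ ∑ A : Finset V, if ∃ u ∈ A, G.Adj v u then f.x A else 0 := by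
  by_contra hcon
  push Not at hcon
  have hN : (0 : ℝ) < Fintype.card (Finset V) := by
    exact_mod_cast Fintype.card_pos
  obtain ⟨c, hc⟩ : ∃ c : ℝ, c = 1 / Fintype.card (Finset V) := ⟨_, rfl⟩
  have hc0 : 0 < c := by rw [hc]; positivity
  have key : ∀ A₀ : Finset V, ∃ η > 0, ∀ x : FracColoring G, IsIndepF G A₀ → v₀ ∈ A₀ →
      c ≤ x.x A₀ → fracChrom G + η ≤ totalWeight x := by
    intro A₀
    by_cases h : IsIndepF G A₀ ∧ v₀ ∈ A₀
    · obtain ⟨f, hf⟩ := hcon A₀ h.1 h.2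
      obtain ⟨η, h0, hη⟩ := gap G A₀ h.1 ⟨v₀, h.2⟩ f hf c hc0
      exact ⟨η, h0, fun x _ _ hx => hη x hx⟩
    · exact ⟨1, one_pos, fun x h1 h2 => absurd ⟨h1, h2⟩ h⟩
  choose η hη0 hη using key
  obtain ⟨M, -, hM⟩ := Finset.exists_min_image Finset.univ η Finset.univ_nonempty
  obtain ⟨f₀, -⟩ := hcon {v₀} (by intro u hu v hv; simp_all) (by simp)
  have hlt : sInf {w : ℝ | ∃ f : FracColoring G, w = totalWeight f} < fracChrom G + η M := by
    have := hη0 M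
    change fracChrom G < _
    linarith
  have hS : {w : ℝ | ∃ f : FracColoring G, w = totalWeight f}.Nonempty := ⟨_, f₀, rfl⟩
  obtain ⟨w, ⟨x, rfl⟩, hx⟩ := exists_lt_of_csInf_lt hS hlt
  have hex : ∃ A ∈ (Finset.univ : Finset (Finset V)), c ≤ if v₀ ∈ A then x.x A else 0 := by
    apply Finset.exists_le_of_sum_le Finset.univ_nonempty
    refine le_trans (le_of_eq ?_) (x.cover v₀)
    rw [Finset.sum_const, Finset.card_univ, nsmul_eq_mul, hc]
    field_simp
  obtain ⟨A, -, hA⟩ := hex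
  by_cases hv : v₀ ∈ A
  · simp only [hv, if_true] at hA
    have h1 := hη A x (x.supp A (by linarith)) hv hA
    have h2 := hM A (Finset.mem_univ _)
    linarith
  · simp only [hv, if_false] at hA
    linarith
end

section
/- Let G be a finite loopless directed graph with at least one arc and let k = ψ_d*(G), so that k > 1. Then the fractional chromatic number of the underlying undirected graph satisfies χ*(G) ≤ k^k/(k−1)^{k−1}. -/
open Classical

/-- A random independent set covering each vertex with probability at least `c`
bounds the fractional chromatic number by `1/c`. -/
theorem aux_random {V : Type} [Fintype V] (G : SimpleGraph V) {ι : Type} [Fintype ι]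
    (P : ι → ℝ) (hP : ∀ i, 0 ≤ P i) (hsum : ∑ i, P i = 1) (I : ι → Finset V)
    (hI : ∀ i, IsIndepF G (I i)) (c : ℝ) (hc : 0 < c)
    (hcov : ∀ v, c ≤ ∑ i, if v ∈ I i then P i else 0) : fracChrom G ≤ c⁻¹ := by
  have hci : 0 < c⁻¹ := inv_pos.mpr hc
  let f : FracColoring G :=
    { x := fun B => c⁻¹ * ∑ i, if I i = B then P i else 0
      nonneg := fun B => mul_nonneg hci.le
        (Finset.sum_nonneg fun i _ => by split_ifs <;> simp [hP])
      supp := by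
        intro B hB
        by_contra hn
        apply hB
        rw [Finset.sum_eq_zero, mul_zero]
        intro i _
        rw [if_neg]
        rintro rfl
        exact hn (hI i)
      cover := by
        intro v
        have h : (∑ B : Finset V, if v ∈ B then c⁻¹ * ∑ i, (if I i = B then P i else 0) else 0)
            = c⁻¹ * ∑ i, if v ∈ I i then P i else 0 := by
          rw [Finset.mul_sum]
          have h1 : ∀ B : Finset V,
              (if v ∈ B then c⁻¹ * ∑ i, (if I i = B then P i else 0) else 0)
              = ∑ i, if I i = B then (if v ∈ B then c⁻¹ * P i else 0) else 0 := by
            intro B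
            split_ifs
            · rw [Finset.mul_sum]
              exact Finset.sum_congr rfl fun i _ => by split_ifs <;> simp
            · simp
          rw [Finset.sum_congr rfl fun B _ => h1 B, Finset.sum_comm]
          refine Finset.sum_congr rfl fun i _ => ?_
          rw [Finset.sum_ite_eq]
          simp
        rw [h]
        calc (1:ℝ) = c⁻¹ * c := (inv_mul_cancel₀ hc.ne').symm
          _ ≤ _ := mul_le_mul_of_nonneg_left (hcov v) hci.le }
  have hw : totalWeight f = c⁻¹ := by
    change ∑ B : Finset V, c⁻¹ * ∑ i, (if I i = B then P i else 0) = c⁻¹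
    rw [← Finset.mul_sum, Finset.sum_comm]
    simp [hsum]
  rw [← hw]
  refine csInf_le ⟨0, ?_⟩ ⟨f, rfl⟩
  rintro w ⟨g, rfl⟩
  exact Finset.sum_nonneg fun A _ => g.nonneg A

/-- The probability of avoiding `T` under independent sampling. -/
theorem aux_avoid {α : Type} [Fintype α] (r : α → ℝ) (T : Finset α) :
    (∑ S : Finset α, if Disjoint S T then
      (∏ a ∈ S, (1 - r a)) * ∏ a ∈ Finset.univ \ S, r a else 0) = ∏ a ∈ T, r a := by
  have h := Finset.prod_add (fun a => if a ∈ T then 0 else 1 - r a) r Finset.univ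
  have h2 : ∏ a, ((if a ∈ T then 0 else 1 - r a) + r a) = ∏ a ∈ T, r a := by
    rw [← Finset.prod_subset (Finset.subset_univ T)]
    · exact Finset.prod_congr rfl fun a ha => by simp [ha]
    · intro a _ ha
      simp [ha]
  rw [← h2, h, Finset.powerset_univ]
  refine Finset.sum_congr rfl fun S _ => ?_
  split_ifs with hd
  · congr 1
    exact Finset.prod_congr rfl fun a ha => by rw [if_neg (Finset.disjoint_left.mp hd ha)]
  · obtain ⟨a, ha, hT⟩ := Finset.not_disjoint_iff.mp hd
    rw [Finset.prod_eq_zero ha (by simp [hT]), zero_mul]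

theorem aux_bound {V : Type} [Fintype V] (D : V → V → Prop) (hloop : ∀ v, ¬ D v v)
    (f : FracColoring (underlying D)) (q : ℝ) (hq0 : 0 < q) (hq1 : q < 1) :
    fracChrom (underlying D) ≤ ((1 - q) * q ^ (localWeight D f - 1))⁻¹ := by
  set r : Finset V → ℝ := fun A => q ^ f.x A with hr
  have hr0 : ∀ A, 0 ≤ r A := fun A => (Real.rpow_pos_of_pos hq0 _).le
  have hr1 : ∀ A, r A ≤ 1 := fun A => Real.rpow_le_one hq0.le hq1.le (f.nonneg A)
  set P : Finset (Finset V) → ℝ :=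
    fun S => (∏ a ∈ S, (1 - r a)) * ∏ a ∈ Finset.univ \ S, r a with hPdef
  have hP0 : ∀ S, 0 ≤ P S := fun S => mul_nonneg
    (Finset.prod_nonneg fun a _ => sub_nonneg.mpr (hr1 a)) (Finset.prod_nonneg fun a _ => hr0 a)
  have hav : ∀ T, (∑ S, if Disjoint S T then P S else 0) = ∏ a ∈ T, r a := by
    intro T
    convert aux_avoid r T
  refine aux_random (underlying D) P hP0 (by simpa using hav ∅)
    (fun S => Finset.univ.filter fun v =>
      (∃ A ∈ S, v ∈ A) ∧ ∀ A ∈ S, ¬ ∃ u ∈ A, D v u) ?_ _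
    (mul_pos (sub_pos.mpr hq1) (Real.rpow_pos_of_pos hq0 _)) ?_
  · intro S u hu v hv hadj
    simp only [Finset.mem_filter, Finset.mem_univ, true_and] at hu hv
    obtain ⟨⟨A, hA, huA⟩, hu2⟩ := hu
    obtain ⟨⟨B, hB, hvB⟩, hv2⟩ := hv
    rw [underlying, SimpleGraph.fromRel_adj] at hadj
    rcases hadj.2 with h | h
    · exact hu2 B hB ⟨v, hvB, h⟩
    · exact hv2 A hA ⟨u, huA, h⟩
  · intro v
    set N : Finset (Finset V) := Finset.univ.filter fun A => ∃ u ∈ A, D v u with hN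
    set F : Finset (Finset V) := Finset.univ.filter fun A => v ∈ A ∧ f.x A ≠ 0 with hF
    have hdis : Disjoint F N := by
      rw [Finset.disjoint_left]
      intro A hA hA2
      simp only [hF, hN, Finset.mem_filter, Finset.mem_univ, true_and] at hA hA2
      obtain ⟨u, hu, hvu⟩ := hA2
      refine f.supp A hA.2 v hA.1 u hu ?_
      rw [underlying, SimpleGraph.fromRel_adj]
      exact ⟨fun h => hloop v (by rwa [← h] at hvu), Or.inl hvu⟩
    have h1 : (∏ a ∈ N, r a) - ∏ a ∈ F ∪ N, r a ≤
        ∑ S, if v ∈ (Finset.univ.filter fun v =>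
          (∃ A ∈ S, v ∈ A) ∧ ∀ A ∈ S, ¬ ∃ u ∈ A, D v u) then P S else 0 := by
      rw [← hav, ← hav, ← Finset.sum_sub_distrib]
      refine Finset.sum_le_sum fun S _ => ?_
      have hPS := hP0 S
      by_cases hd : Disjoint S N
      · by_cases hd2 : Disjoint S (F ∪ N)
        · rw [if_pos hd, if_pos hd2, sub_self]
          split_ifs <;> simp [hPS]
        · rw [if_pos hd, if_neg hd2, sub_zero, if_pos]
          simp only [Finset.mem_filter, Finset.mem_univ, true_and]
          obtain ⟨A, hAS, hA⟩ := Finset.not_disjoint_iff.mp hd2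
          have hAN : A ∉ N := Finset.disjoint_left.mp hd hAS
          have hAF : A ∈ F := (Finset.mem_union.mp hA).resolve_right hAN
          refine ⟨⟨A, hAS, (Finset.mem_filter.mp hAF).2.1⟩, fun B hB hBD => ?_⟩
          exact Finset.disjoint_left.mp hd hB (Finset.mem_filter.mpr ⟨Finset.mem_univ _, hBD⟩)
      · rw [if_neg hd, zero_sub]
        have : 0 ≤ (if Disjoint S (F ∪ N) then P S else 0) := by split_ifs <;> simp [hPS]
        have : 0 ≤ (if v ∈ (Finset.univ.filter fun v =>
          (∃ A ∈ S, v ∈ A) ∧ ∀ A ∈ S, ¬ ∃ u ∈ A, D v u) then P S else 0) := by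
            split_ifs <;> simp [hPS]
        linarith
    refine le_trans ?_ h1
    rw [Finset.prod_union hdis]
    have hNle : q ^ (localWeight D f - 1) ≤ ∏ a ∈ N, r a := by
      rw [hr, ← Real.rpow_sum_of_pos hq0]
      refine Real.rpow_le_rpow_of_exponent_ge hq0 hq1.le ?_
      rw [localWeight, add_sub_cancel_left, hN, Finset.sum_filter]
      exact le_ciSup (f := fun v : V => ∑ A : Finset V, if ∃ u ∈ A, D v u then f.x A else 0)
        (Set.finite_range _).bddAbove v
    have hFle : ∏ a ∈ F, r a ≤ q := by
      rw [hr, ← Real.rpow_sum_of_pos hq0]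
      conv_rhs => rw [← Real.rpow_one q]
      refine Real.rpow_le_rpow_of_exponent_ge hq0 hq1.le ?_
      refine (f.cover v).trans (le_of_eq ?_)
      rw [hF, Finset.sum_filter]
      refine Finset.sum_congr rfl fun A _ => ?_
      by_cases h0 : f.x A = 0 <;> simp [h0]
    have hNpos : 0 ≤ q ^ (localWeight D f - 1) := (Real.rpow_pos_of_pos hq0 _).le
    have : (1 - q) * q ^ (localWeight D f - 1) ≤ (1 - ∏ a ∈ F, r a) * ∏ a ∈ N, r a :=
      mul_le_mul (by linarith) hNle hNpos (by linarith)
    linarith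

theorem aux_two_le {V : Type} [Fintype V] (D : V → V → Prop) (harc : ∃ u v, D u v)
    (f : FracColoring (underlying D)) : 2 ≤ localWeight D f := by
  obtain ⟨u, v, huv⟩ := harc
  have h : (∑ A : Finset V, if ∃ w ∈ A, D u w then f.x A else 0) ≤
      ⨆ v : V, ∑ A : Finset V, if ∃ u ∈ A, D v u then f.x A else 0 :=
    le_ciSup (f := fun v : V => ∑ A : Finset V, if ∃ u ∈ A, D v u then f.x A else 0)
        (Set.finite_range _).bddAbove u
  have h2 : (∑ A : Finset V, if v ∈ A then f.x A else 0) ≤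
      ∑ A : Finset V, if ∃ w ∈ A, D u w then f.x A else 0 := by
    refine Finset.sum_le_sum fun A _ => ?_
    by_cases hv : v ∈ A
    · rw [if_pos hv, if_pos ⟨v, hv, huv⟩]
    · rw [if_neg hv]
      split_ifs <;> simp [f.nonneg A]
  have := f.cover v
  rw [localWeight]
  linarith

theorem aux_nonempty {V : Type} [Fintype V] (G : SimpleGraph V) : Nonempty (FracColoring G) := by
  refine ⟨⟨fun A => if A.card = 1 then 1 else 0, fun A => by split_ifs <;> simp, ?_, ?_⟩⟩
  · intro A hA u hu v hv hadj
    have h1 : A.card = 1 := by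
      by_contra h
      simp [h] at hA
    exact hadj.ne (Finset.card_le_one.mp h1.le u hu v hv)
  · intro v
    refine le_trans ?_ (Finset.single_le_sum (a := ({v} : Finset V)) ?_ (Finset.mem_univ _))
    · simp
    · intro A _
      split_ifs <;> simp

/-- For a finite loopless digraph `D` with at least one arc, `k = ψ_d*(D) > 1` and the
fractional chromatic number of the underlying graph is at most `k^k/(k-1)^(k-1)`
(real powers). -/
theorem stmt5 {V : Type} [Fintype V] (D : V → V → Prop)
    (hloop : ∀ v, ¬ D v v) (harc : ∃ u v, D u v) :
    1 < fracDirLocal D ∧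
      fracChrom (underlying D) ≤
        fracDirLocal D ^ fracDirLocal D / (fracDirLocal D - 1) ^ (fracDirLocal D - 1) := by
  have hne : {w : ℝ | ∃ f : FracColoring (underlying D), w = localWeight D f}.Nonempty := by
    obtain ⟨f⟩ := aux_nonempty (underlying D)
    exact ⟨_, f, rfl⟩
  have hlow : ∀ w ∈ {w : ℝ | ∃ f : FracColoring (underlying D), w = localWeight D f}, 2 ≤ w := by
    rintro w ⟨f, rfl⟩
    exact aux_two_le D harc f
  have hk2 : 2 ≤ fracDirLocal D := le_csInf hne hlow
  refine ⟨by linarith, ?_⟩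
  have hmem : fracDirLocal D ∈
      closure {w : ℝ | ∃ f : FracColoring (underlying D), w = localWeight D f} :=
    csInf_mem_closure hne ⟨2, hlow⟩
  generalize fracDirLocal D = k at *
  have hk0 : 0 < k := by linarith
  have hk1 : 0 < k - 1 := by linarith
  have hq0 : 0 < (k - 1) / k := div_pos hk1 hk0
  have hq1 : (k - 1) / k < 1 := by rw [div_lt_one hk0]; linarith
  have hclosed : IsClosed {w : ℝ | fracChrom (underlying D) ≤
      ((1 - (k - 1) / k) * ((k - 1) / k) ^ (w - 1))⁻¹} := by
    refine isClosed_le continuous_const ?_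
    refine Continuous.inv₀ ?_ ?_
    · refine continuous_const.mul ?_
      exact (Real.continuous_const_rpow hq0.ne').comp (continuous_id.sub continuous_const)
    · intro w
      exact (mul_pos (sub_pos.mpr hq1) (Real.rpow_pos_of_pos hq0 _)).ne'
  have hfin : fracChrom (underlying D) ≤
      ((1 - (k - 1) / k) * ((k - 1) / k) ^ (k - 1))⁻¹ := by
    refine closure_minimal ?_ hclosed hmem
    rintro w ⟨f, rfl⟩
    exact aux_bound D hloop f _ hq0 hq1
  refine hfin.trans (le_of_eq ?_)
  rw [Real.div_rpow hk1.le hk0.le]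
  have e1 : 1 - (k - 1) / k = 1 / k := by field_simp; ring
  have e2 : k ^ k = k * k ^ (k - 1) := by
    rw [Real.rpow_sub_one hk0.ne']; field_simp
  rw [e1, e2]
  have a1 := (Real.rpow_pos_of_pos hk0 (k-1)).ne'
  have a2 := (Real.rpow_pos_of_pos hk1 (k-1)).ne'
  field_simp
end

section
/- For every real number k ≥ 2 and every ε > 0 there exists a finite loopless directed graph G with ψ_d*(G) ≤ k and χ*(G) > k^k/(k−1)^{k−1} − ε, where χ*(G) denotes the fractional chromatic number of the underlying undirected graph. -/
open Classical

open Finset in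
lemma kk_step (m r s : ℕ) (hrs : r ≤ s) (hsm : s ≤ m)
    (X A : Finset (Finset (Fin m))) (hX : ∀ x ∈ X, x.card = r) (hA : ∀ a ∈ A, a.card = s)
    (hne : A.Nonempty) (h : ∀ x ∈ X, ∀ a ∈ A, ¬ x ⊆ a) :
    ∃ t, t ≤ m ∧ X.card + t.choose r ≤ m.choose r ∧ A.card ≤ (t + 1).choose s := by
  have hcard : 1 ≤ A.card := hne.card_pos
  have hAm : A.card ≤ m.choose s := by
    have h1 : A ⊆ powersetCard s univ := fun a ha => by simp [mem_powersetCard, hA a ha]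
    simpa using card_le_card h1
  have hsP : s.choose s ≤ A.card := by simpa using hcard
  set t := Nat.findGreatest (fun t => t.choose s ≤ A.card) m with ht
  have htm : t ≤ m := Nat.findGreatest_le m
  have hst : s ≤ t := Nat.le_findGreatest hsm hsP
  have htP : t.choose s ≤ A.card :=
    Nat.findGreatest_spec (P := fun t => t.choose s ≤ A.card) hsm hsP
  refine ⟨t, htm, ?_, ?_⟩
  · have hsz : (A : Set (Finset (Fin m))).Sized s := fun a ha => hA a ha
    have key := kruskal_katona_lovasz_form (i := s - r) (Nat.sub_le _ _) hst htm hsz htP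
    rw [Nat.sub_sub_self hrs] at key
    set S := (shadow^[s - r] A) with hS
    have hdisj : Disjoint X S := by
      rw [disjoint_left]
      intro x hx hxS
      rw [hS, mem_shadow_iterate_iff_exists_sdiff] at hxS
      obtain ⟨a, ha, hxa, -⟩ := hxS
      exact h x hx a ha hxa
    have hsub : X ∪ S ⊆ powersetCard r univ := by
      intro x hx
      rw [mem_powersetCard]
      refine ⟨subset_univ _, ?_⟩
      rcases mem_union.1 hx with hx | hx
      · exact hX x hx
      · have := hsz.shadow_iterate (k := s - r) (by simpa [hS] using hx)
        omega
    have h2 := card_le_card hsub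
    rw [card_union_of_disjoint hdisj] at h2
    simp at h2
    omega
  · rcases htm.lt_or_eq with hlt | heq
    · have := Nat.findGreatest_is_greatest (P := fun t => t.choose s ≤ A.card)
        (n := m) (k := t + 1) (by omega) (by omega)
      simp only [not_le] at this
      exact this.le
    · rw [heq]
      exact hAm.trans (Nat.choose_le_choose s (Nat.le_succ m))

lemma pow_incr (w d : ℝ) (hw : 0 ≤ w) (hw1 : w ≤ 1) (hd : 0 ≤ d) (s : ℕ) :
    (w + d) ^ s ≤ w ^ s + ((1 + d) ^ s - 1) := by
  induction s with
  | zero => simp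
  | succ s ih =>
    have h1 : w ^ s ≤ 1 := pow_le_one₀ hw hw1
    have h2 : 1 ≤ (1 + d) ^ s := one_le_pow₀ (by linarith)
    have h3 : (w + d) * (w + d) ^ s ≤ (w + d) * (w ^ s + ((1 + d) ^ s - 1)) :=
      mul_le_mul_of_nonneg_left ih (by linarith)
    have h4 : 0 ≤ (1 - w) * ((1 + d) ^ s - 1) := mul_nonneg (by linarith) (by linarith)
    have h5 : 0 ≤ d * (1 - w ^ s) := mul_nonneg hd (by linarith)
    rw [pow_succ', pow_succ', pow_succ']
    nlinarith

/-- the value of the maximum of `(1 - w^r) w^s`. -/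
noncomputable def Mx (r s : ℕ) : ℝ :=
  ((s : ℝ) / r) ^ ((s : ℝ) / r) / (1 + (s : ℝ) / r) ^ (1 + (s : ℝ) / r)

lemma le_Mx (r s : ℕ) (hr : 0 < r) (hs : 0 < s) (w : ℝ) (hw : 0 ≤ w) (hw1 : w ≤ 1) :
    (1 - w ^ r) * w ^ s ≤ Mx r s := by
  have hr' : (0 : ℝ) < r := by exact_mod_cast hr
  have hs' : (0 : ℝ) < s := by exact_mod_cast hs
  unfold Mx
  set p : ℝ := (s : ℝ) / r with hp
  have hp0 : 0 < p := by positivity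
  set q : ℝ := w ^ r with hq
  have hq0 : 0 ≤ q := by positivity
  have hq1 : q ≤ 1 := pow_le_one₀ hw hw1
  have hqs : w ^ s = q ^ p := by
    rw [hq, ← Real.rpow_natCast_mul hw, hp, mul_div_cancel₀ _ hr'.ne', Real.rpow_natCast]
  rw [hqs]
  have hk : 0 < 1 + p := by linarith
  have amgm := Real.geom_mean_le_arith_mean2_weighted (w₁ := 1 / (1 + p)) (w₂ := p / (1 + p))
    (p₁ := 1 - q) (p₂ := q / p) (by positivity) (by positivity) (by linarith) (by positivity)
    (by field_simp)
  have hR : 1 / (1 + p) * (1 - q) + p / (1 + p) * (q / p) = 1 / (1 + p) := by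
    field_simp; ring
  rw [hR] at amgm
  have h1q : 0 ≤ 1 - q := by linarith
  have h2 := Real.rpow_le_rpow (by positivity) amgm hk.le
  rw [Real.mul_rpow (by positivity) (by positivity), ← Real.rpow_mul h1q,
    ← Real.rpow_mul (by positivity), div_mul_cancel₀ _ hk.ne', div_mul_cancel₀ _ hk.ne',
    Real.rpow_one, Real.div_rpow hq0 hp0.le, Real.div_rpow zero_le_one hk.le,
    Real.one_rpow] at h2
  have hpp : 0 < p ^ p := by positivity
  have hkk : 0 < (1 + p) ^ (1 + p) := by positivity
  rw [le_div_iff₀ hkk]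
  rw [le_div_iff₀ hkk, mul_div_assoc', div_mul_eq_mul_div, div_le_iff₀ hpp, one_mul] at h2
  exact h2

noncomputable def bet (r s m : ℕ) : ℝ :=
  (Mx r s + ((1 + ((r : ℝ) + 1) / m) ^ s - 1)) * ((m : ℝ) / (m - r - s)) ^ s

lemma count_bound (m r s t a b : ℕ) (hr : 0 < r) (hs : 0 < s) (hm : r + s < m) (ht : t ≤ m)
    (ha : a + t.choose r ≤ m.choose r) (hb : b ≤ (t + 1).choose s) :
    (a : ℝ) * b ≤ bet r s m * (m.choose r * (m - r).choose s) := by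
  have hm0 : (0 : ℝ) < m := by exact_mod_cast (by omega : 0 < m)
  have hms : (0 : ℝ) < (m : ℝ) - r - s := by
    have : ((r + s : ℕ) : ℝ) < m := by exact_mod_cast hm
    push_cast at this; linarith
  set w : ℝ := ((t - r : ℕ) : ℝ) / m with hw
  have hw0 : 0 ≤ w := by positivity
  have hw1 : w ≤ 1 := by
    rw [hw, div_le_one hm0]; exact_mod_cast (by omega : t - r ≤ m)
  set d : ℝ := ((r : ℝ) + 1) / m with hd
  have hd0 : 0 ≤ d := by positivity
  have hrf : (0 : ℝ) < (r.factorial : ℝ) := by exact_mod_cast r.factorial_pos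
  have hsf : (0 : ℝ) < (s.factorial : ℝ) := by exact_mod_cast s.factorial_pos
  have e1 : w ^ r * m.choose r ≤ t.choose r := by
    have h1 : (t - r) ^ r ≤ r.factorial * t.choose r := by
      rw [← Nat.descFactorial_eq_factorial_mul_choose]
      exact (Nat.pow_le_pow_left (by omega) r).trans (Nat.pow_sub_le_descFactorial t r)
    have h2 : r.factorial * m.choose r ≤ m ^ r := by
      rw [← Nat.descFactorial_eq_factorial_mul_choose]
      exact Nat.descFactorial_le_pow m r
    have h1' : ((t - r : ℕ) : ℝ) ^ r ≤ r.factorial * t.choose r := by exact_mod_cast h1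
    have h2' : (r.factorial : ℝ) * m.choose r ≤ (m : ℝ) ^ r := by exact_mod_cast h2
    have h3 : w ^ r * (m : ℝ) ^ r = ((t - r : ℕ) : ℝ) ^ r := by
      rw [← mul_pow, hw, div_mul_cancel₀ _ hm0.ne']
    have h4 : w ^ r * (r.factorial * m.choose r) ≤ w ^ r * (m : ℝ) ^ r :=
      mul_le_mul_of_nonneg_left h2' (by positivity)
    refine le_of_mul_le_mul_left ?_ hrf
    calc (r.factorial : ℝ) * (w ^ r * m.choose r) = w ^ r * (r.factorial * m.choose r) := by ring
      _ ≤ _ := h4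
      _ = _ := h3
      _ ≤ _ := h1'
  have e2 : (a : ℝ) ≤ (1 - w ^ r) * m.choose r := by
    have : (a : ℝ) + t.choose r ≤ m.choose r := by exact_mod_cast ha
    linarith
  set c : ℝ := (m : ℝ) / (m - r - s) with hc
  have hc0 : 0 < c := by positivity
  have e3 : (b : ℝ) ≤ (w + d) ^ s * c ^ s * (m - r).choose s := by
    have h1 : s.factorial * (t + 1).choose s ≤ (t + 1) ^ s := by
      rw [← Nat.descFactorial_eq_factorial_mul_choose]
      exact Nat.descFactorial_le_pow _ s
    have h2 : (m - r - s) ^ s ≤ s.factorial * (m - r).choose s := by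
      rw [← Nat.descFactorial_eq_factorial_mul_choose]
      exact (Nat.pow_le_pow_left (by omega) s).trans (Nat.pow_sub_le_descFactorial _ s)
    have h1' : (s.factorial : ℝ) * (t + 1).choose s ≤ ((t : ℝ) + 1) ^ s := by exact_mod_cast h1
    have hcast : ((m - r - s : ℕ) : ℝ) = (m : ℝ) - r - s := by
      rw [Nat.cast_sub (by omega), Nat.cast_sub (by omega)]
    have h2' : ((m : ℝ) - r - s) ^ s ≤ s.factorial * (m - r).choose s := by
      rw [← hcast]; exact_mod_cast h2
    have h3 : (t : ℝ) + 1 ≤ (w + d) * m := by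
      have : (w + d) * m = ((t - r : ℕ) : ℝ) + (r + 1) := by
        rw [hw, hd]; field_simp
      rw [this]
      exact_mod_cast (by omega : t + 1 ≤ (t - r) + (r + 1))
    have h4 : (w + d) * m = (w + d) * c * ((m : ℝ) - r - s) := by
      rw [hc]; field_simp
    refine le_of_mul_le_mul_left ?_ hsf
    calc (s.factorial : ℝ) * b ≤ s.factorial * (t + 1).choose s := by
          gcongr
      _ ≤ ((t : ℝ) + 1) ^ s := h1'
      _ ≤ ((w + d) * m) ^ s := by gcongr
      _ = (w + d) ^ s * c ^ s * ((m : ℝ) - r - s) ^ s := by rw [h4, mul_pow, mul_pow]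
      _ ≤ (w + d) ^ s * c ^ s * (s.factorial * (m - r).choose s) := by gcongr
      _ = _ := by ring
  have hwr : 0 ≤ 1 - w ^ r := by
    have := pow_le_one₀ (n := r) hw0 hw1
    linarith
  have hwr' : 1 - w ^ r ≤ 1 := by
    have : 0 ≤ w ^ r := by positivity
    linarith
  have e4 : (1 - w ^ r) * (w + d) ^ s ≤ Mx r s + ((1 + d) ^ s - 1) := by
    have h1 := pow_incr w d hw0 hw1 hd0 s
    have h2 : 1 ≤ (1 + d) ^ s := one_le_pow₀ (by linarith)
    have h3 := le_Mx r s hr hs w hw0 hw1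
    have h4 := mul_le_mul_of_nonneg_left h1 hwr
    nlinarith
  calc (a : ℝ) * b ≤ ((1 - w ^ r) * m.choose r) * ((w + d) ^ s * c ^ s * (m - r).choose s) := by
        gcongr
    _ = ((1 - w ^ r) * (w + d) ^ s) * (c ^ s * (m.choose r * (m - r).choose s)) := by ring
    _ ≤ (Mx r s + ((1 + d) ^ s - 1)) * (c ^ s * (m.choose r * (m - r).choose s)) := by
        gcongr
    _ = _ := by rw [bet]; ring

section constr
variable {V : Type} [Fintype V] {m r s : ℕ} (X A : V → Finset (Fin m))

/-- arc relation -/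
def arc (v u : V) : Prop := X u ⊆ A v

noncomputable def cls (c : Fin m) : Finset V := Finset.univ.filter (fun v => c ∈ X v)

lemma sum_cls (P : Finset V → Prop) [DecidablePred P] :
    (∑ B : Finset V, if P B then (∑ c : Fin m, if B = cls X c then (1 / (r : ℝ)) else 0) else 0)
      = ((Finset.univ.filter (fun c : Fin m => P (cls X c))).card : ℝ) / r := by
  have h1 : ∀ B : Finset V, (if P B then (∑ c : Fin m, if B = cls X c then (1 / (r : ℝ)) else 0)
      else 0) = ∑ c : Fin m, if B = cls X c then (if P (cls X c) then 1 / (r : ℝ) else 0) else 0 := by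
    intro B
    by_cases hB : P B
    · rw [if_pos hB]
      refine Finset.sum_congr rfl fun c _ => ?_
      by_cases hc : B = cls X c
      · rw [if_pos hc, if_pos hc, if_pos (hc ▸ hB)]
      · rw [if_neg hc, if_neg hc]
    · rw [if_neg hB]
      symm
      refine Finset.sum_eq_zero fun c _ => ?_
      by_cases hc : B = cls X c
      · rw [if_pos hc, if_neg (hc ▸ hB)]
      · rw [if_neg hc]
  rw [Finset.sum_congr rfl fun B _ => h1 B, Finset.sum_comm]
  simp only [Finset.sum_ite_eq', Finset.sum_ite_eq, Finset.mem_univ, if_true]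
  rw [← Finset.sum_filter, Finset.sum_const, nsmul_eq_mul]
  ring

noncomputable def col (hr : 0 < r) (hX : ∀ v, (X v).card = r)
    (hd : ∀ v, Disjoint (X v) (A v)) : FracColoring (underlying (arc X A)) where
  x B := ∑ c : Fin m, if B = cls X c then (1 / (r : ℝ)) else 0
  nonneg B := Finset.sum_nonneg fun c _ => by split_ifs <;> positivity
  supp B hB := by
    obtain ⟨c, -, hc⟩ := Finset.exists_ne_zero_of_sum_ne_zero hB
    have hBc : B = cls X c := by
      by_contra h
      exact hc (if_neg h)
    subst hBc
    have key : ∀ u ∈ cls X c, ∀ v ∈ cls X c, ¬ arc X A u v := by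
      intro u hu v hv huv
      simp only [cls, Finset.mem_filter, Finset.mem_univ, true_and] at hu hv
      exact Finset.disjoint_left.1 (hd u) hu (huv hv)
    intro u hu v hv huv
    rw [underlying, SimpleGraph.fromRel_adj] at huv
    rcases huv.2 with h | h
    · exact key u hu v hv h
    · exact key v hv u hu h
  cover v := by
    have := sum_cls (r := r) X (fun B => v ∈ B)
    rw [this]
    have h2 : (Finset.univ.filter (fun c : Fin m => v ∈ cls X c)) = X v := by
      ext c; simp [cls]
    rw [h2, hX v, div_self]
    exact_mod_cast hr.ne'

lemma local_le (k : ℝ) (hr : 0 < r) (hX : ∀ v, (X v).card = r) (hA : ∀ v, (A v).card = s)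
    (hd : ∀ v, Disjoint (X v) (A v)) (hk : (s : ℝ) / r ≤ k - 1) :
    fracDirLocal (arc X A) ≤ k := by
  have hb : BddBelow {w : ℝ | ∃ f : FracColoring (underlying (arc X A)),
      w = localWeight (arc X A) f} := by
    refine ⟨0, ?_⟩
    rintro w ⟨f, rfl⟩
    unfold localWeight
    have : 0 ≤ ⨆ v : V, ∑ B : Finset V, if ∃ u ∈ B, arc X A v u then f.x B else 0 := by
      refine Real.iSup_nonneg fun v => Finset.sum_nonneg fun B _ => ?_
      split_ifs
      · exact f.nonneg B
      · exact le_rfl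
    linarith
  refine (csInf_le hb ⟨col X A hr hX hd, rfl⟩).trans ?_
  unfold localWeight
  have hk0 : 0 ≤ k - 1 := le_trans (by positivity) hk
  have : (⨆ v : V, ∑ B : Finset V, if ∃ u ∈ B, arc X A v u then (col X A hr hX hd).x B else 0)
      ≤ k - 1 := by
    refine Real.iSup_le (fun v => ?_) hk0
    refine le_trans (le_of_eq (sum_cls (r := r) X (fun B => ∃ u ∈ B, arc X A v u))) ?_
    refine le_trans ?_ hk
    rw [← hA v]
    gcongr
    intro c hc
    simp only [cls, Finset.mem_filter, Finset.mem_univ, true_and] at hc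
    obtain ⟨u, hu, huv⟩ := hc
    exact huv hu
  linarith

lemma indep_le (hr : 0 < r) (hrs : r ≤ s) (hm : r + s < m)
    (hX : ∀ v, (X v).card = r) (hA : ∀ v, (A v).card = s)
    (hd : ∀ v, Disjoint (X v) (A v)) (hinj : ∀ u v, X u = X v → A u = A v → u = v)
    (hbet : 0 ≤ bet r s m)
    (I : Finset V) (hI : IsIndepF (underlying (arc X A)) I) :
    (I.card : ℝ) ≤ bet r s m * (m.choose r * (m - r).choose s) := by
  rcases I.eq_empty_or_nonempty with rfl | hne
  · simp only [Finset.card_empty, Nat.cast_zero]; positivity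
  have hno : ∀ u ∈ I, ∀ v ∈ I, ¬ X u ⊆ A v := by
    intro u hu v hv huv
    by_cases h : u = v
    · subst h
      have : X u = ∅ := by
        rw [← Finset.disjoint_self_iff_empty]
        exact (hd u).mono_right huv
      have h2 := hX u
      rw [this] at h2
      simp at h2
      omega
    · refine hI u hu v hv ?_
      rw [underlying, SimpleGraph.fromRel_adj]
      exact ⟨h, Or.inr huv⟩
  obtain ⟨t, ht, h1, h2⟩ := kk_step m r s hrs (by omega) (I.image X) (I.image A)
    (by simp [hX]) (by simp [hA]) (hne.image A) (by
      intro x hx a ha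
      obtain ⟨u, hu, rfl⟩ := Finset.mem_image.1 hx
      obtain ⟨v, hv, rfl⟩ := Finset.mem_image.1 ha
      exact hno u hu v hv)
  refine le_trans ?_ (count_bound m r s t _ _ hr (by omega) hm ht h1 h2)
  have : I.card ≤ (I.image X).card * (I.image A).card := by
    rw [← Finset.card_product]
    refine Finset.card_le_card_of_injOn (fun v => (X v, A v)) ?_ ?_
    · intro v hv
      have hv' : v ∈ I := hv
      simp only [Finset.coe_product, Set.mem_prod, Finset.mem_coe]
      exact ⟨Finset.mem_image_of_mem X hv', Finset.mem_image_of_mem A hv'⟩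
    · intro u _ v _ huv
      simp only [Prod.mk.injEq] at huv
      exact hinj u v huv.1 huv.2
  exact_mod_cast this

lemma chrom_ge (hr : 0 < r) (hrs : r ≤ s) (hm : r + s < m)
    (hX : ∀ v, (X v).card = r) (hA : ∀ v, (A v).card = s)
    (hd : ∀ v, Disjoint (X v) (A v)) (hinj : ∀ u v, X u = X v → A u = A v → u = v)
    (hV : Fintype.card V = m.choose r * (m - r).choose s)
    (hbet : 0 < bet r s m) (L : ℝ) (hL : bet r s m * L ≤ 1) :
    L ≤ fracChrom (underlying (arc X A)) := by
  refine le_csInf ⟨_, col X A hr hX hd, rfl⟩ ?_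
  rintro w ⟨f, rfl⟩
  have hN : (0 : ℝ) < (m.choose r * (m - r).choose s) := by
    have h1 := Nat.choose_pos (n := m) (k := r) (by omega)
    have h2 := Nat.choose_pos (n := m - r) (k := s) (by omega)
    positivity
  set N : ℝ := (m.choose r * (m - r).choose s) with hNdef
  have h1 : N ≤ ∑ v : V, ∑ B : Finset V, if v ∈ B then f.x B else 0 := by
    calc N = ∑ v : V, (1 : ℝ) := by
          rw [Finset.sum_const, nsmul_eq_mul, mul_one, Finset.card_univ, hV]; push_cast; rfl
      _ ≤ _ := Finset.sum_le_sum fun v _ => f.cover v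
  rw [Finset.sum_comm] at h1
  have h2 : ∀ B : Finset V, (∑ v : V, if v ∈ B then f.x B else 0) ≤ bet r s m * N * f.x B := by
    intro B
    rw [← Finset.sum_filter, Finset.sum_const, nsmul_eq_mul]
    by_cases h0 : f.x B = 0
    · simp [h0]
    · refine mul_le_mul_of_nonneg_right ?_ (f.nonneg B)
      have : (Finset.univ.filter (fun v => v ∈ B)) = B := by ext; simp
      rw [this]
      exact indep_le X A hr hrs hm hX hA hd hinj hbet.le B (f.supp B h0)
  have h3 : N ≤ bet r s m * N * totalWeight f := by
    refine h1.trans ((Finset.sum_le_sum fun B _ => h2 B).trans ?_)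
    rw [← Finset.mul_sum]
    exact le_rfl
  have h4 : 1 ≤ bet r s m * totalWeight f := by
    refine le_of_mul_le_mul_left ?_ hN
    linarith
  exact le_of_mul_le_mul_left (hL.trans h4) hbet
end constr

lemma Mx_pos (r s : ℕ) (hr : 0 < r) (hs : 0 < s) : 0 < Mx r s := by
  unfold Mx
  have hr' : (0 : ℝ) < r := by exact_mod_cast hr
  have hs' : (0 : ℝ) < s := by exact_mod_cast hs
  positivity

open Filter Topology in
lemma bet_tendsto (r s : ℕ) : Tendsto (fun m : ℕ => bet r s m) atTop (𝓝 (Mx r s)) := by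
  unfold bet
  have h1 : Tendsto (fun m : ℕ => ((r : ℝ) + 1) / (m : ℝ)) atTop (𝓝 0) :=
    tendsto_const_div_atTop_nhds_zero_nat _
  have h2 : Tendsto (fun m : ℕ => (m : ℝ) / ((m : ℝ) - r - s)) atTop (𝓝 1) := by
    have h3 : Tendsto (fun m : ℕ => (1 - ((r : ℝ) + s) / (m : ℝ))⁻¹) atTop (𝓝 ((1 - 0)⁻¹)) :=
      (tendsto_const_nhds.sub (tendsto_const_div_atTop_nhds_zero_nat _)).inv₀ (by norm_num)
    rw [sub_zero, inv_one] at h3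
    refine h3.congr' ?_
    filter_upwards [eventually_gt_atTop 0] with m hm
    have hm0 : (m : ℝ) ≠ 0 := by exact_mod_cast hm.ne'
    have : (1 - ((r : ℝ) + s) / (m : ℝ)) = ((m : ℝ) - r - s) / m := by
      field_simp; ring
    rw [this, inv_div]
  have h4 := ((tendsto_const_nhds (x := Mx r s)).add
    ((((tendsto_const_nhds (x := (1 : ℝ))).add h1).pow s).sub
      (tendsto_const_nhds (x := (1 : ℝ))))).mul (h2.pow s)
  simpa using h4

/-- For every real `k ≥ 2` and `ε > 0` there is a finite loopless digraph `D` with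
`ψ_d*(D) ≤ k` and `χ*` of the underlying graph exceeding `k^k/(k-1)^(k-1) - ε`
(real powers). -/
theorem stmt7 (k : ℝ) (hk : 2 ≤ k) (ε : ℝ) (hε : 0 < ε) :
    ∃ (n : ℕ) (D : Fin n → Fin n → Prop),
      (∀ v, ¬ D v v) ∧ fracDirLocal D ≤ k ∧
      k ^ k / (k - 1) ^ (k - 1) - ε < fracChrom (underlying D) := by
  set P : ℝ → ℝ := fun p => (1 + p) ^ (1 + p) / p ^ p with hP
  have hPk : P (k - 1) = k ^ k / (k - 1) ^ (k - 1) := by simp [hP]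
  have hk1 : 0 < k - 1 := by linarith
  have hcont : ContinuousAt P (k - 1) := by
    have c1 : ContinuousAt (fun p : ℝ => (1 + p) ^ (1 + p)) (k - 1) :=
      ContinuousAt.rpow (by fun_prop) (by fun_prop) (Or.inl (by linarith))
    have c2 : ContinuousAt (fun p : ℝ => p ^ p) (k - 1) :=
      ContinuousAt.rpow (by fun_prop) (by fun_prop) (Or.inl (by linarith))
    exact c1.div c2 (by positivity)
  have hfl : Filter.Tendsto (fun r : ℕ => ((⌊(k - 1) * (r : ℝ)⌋₊ : ℕ) : ℝ) / (r : ℝ))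
      Filter.atTop (nhds (k - 1)) :=
    (tendsto_nat_floor_mul_div_atTop hk1.le).comp tendsto_natCast_atTop_atTop
  have hev := (hcont.tendsto.comp hfl).eventually (lt_mem_nhds (by linarith :
    P (k - 1) - ε / 2 < P (k - 1)))
  obtain ⟨r, hrL, hr⟩ := (hev.and (Filter.eventually_gt_atTop 0)).exists
  have hr' : (0 : ℝ) < r := by exact_mod_cast hr
  simp only [Function.comp] at hrL
  set s : ℕ := ⌊(k - 1) * (r : ℝ)⌋₊ with hs
  have hrs : r ≤ s := by
    refine Nat.le_floor ?_
    nlinarith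
  have hsr : (s : ℝ) / r ≤ k - 1 := by
    rw [div_le_iff₀ hr']
    exact Nat.floor_le (by positivity)
  have hs0 : 0 < s := by omega
  have hM := Mx_pos r s hr hs0
  have hMP : Mx r s * P ((s : ℝ) / r) = 1 := by
    have hs' : (0 : ℝ) < s := by exact_mod_cast hs0
    have h1 : (0 : ℝ) < ((s : ℝ) / r) ^ ((s : ℝ) / r) := by positivity
    have h2 : (0 : ℝ) < (1 + (s : ℝ) / r) ^ (1 + (s : ℝ) / r) := by positivity
    simp only [Mx, hP]
    rw [div_mul_div_comm, mul_comm, div_self (by positivity)]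
  set L : ℝ := P (k - 1) - ε / 2 with hL
  have hML : Mx r s * L < 1 := by
    rw [← hMP]
    exact mul_lt_mul_of_pos_left hrL hM
  have ht := bet_tendsto r s
  obtain ⟨m, ⟨hm1, hm2⟩, hm3⟩ := (((ht.eventually (lt_mem_nhds hM)).and
    ((ht.mul_const L).eventually (gt_mem_nhds hML))).and
      (Filter.eventually_gt_atTop (r + s))).exists
  set T : Finset (Σ _ : Finset (Fin m), Finset (Fin m)) :=
    (Finset.powersetCard r Finset.univ).sigma (fun x => Finset.powersetCard s xᶜ) with hT
  have hTc : T.card = m.choose r * (m - r).choose s := by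
    rw [hT, Finset.card_sigma, Finset.sum_congr rfl (g := fun _ => (m - r).choose s)]
    · simp
    · intro x hx
      rw [Finset.mem_powersetCard] at hx
      rw [Finset.card_powersetCard, Finset.card_compl, hx.2, Fintype.card_fin]
  set e := T.equivFin.symm with he
  have hmem : ∀ v, ((e v : Σ _ : Finset (Fin m), Finset (Fin m)).1.card = r) ∧
      (e v : Σ _ : Finset (Fin m), Finset (Fin m)).2 ⊆
        ((e v : Σ _ : Finset (Fin m), Finset (Fin m)).1)ᶜ ∧
      (e v : Σ _ : Finset (Fin m), Finset (Fin m)).2.card = s := by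
    intro v
    have h := (e v).2
    replace h := Finset.mem_sigma.1 h
    rw [Finset.mem_powersetCard, Finset.mem_powersetCard] at h
    exact ⟨h.1.2, h.2.1, h.2.2⟩
  set X : Fin T.card → Finset (Fin m) := fun v => (e v : Σ _ : Finset (Fin m), Finset (Fin m)).1
    with hX
  set A : Fin T.card → Finset (Fin m) := fun v => (e v : Σ _ : Finset (Fin m), Finset (Fin m)).2
    with hA
  have hXc : ∀ v, (X v).card = r := fun v => (hmem v).1
  have hAc : ∀ v, (A v).card = s := fun v => (hmem v).2.2
  have hd : ∀ v, Disjoint (X v) (A v) := by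
    intro v
    rw [Finset.disjoint_left]
    intro c hc hc'
    exact Finset.mem_compl.1 ((hmem v).2.1 hc') hc
  have hinj : ∀ u v, X u = X v → A u = A v → u = v := by
    intro u v h1 h2
    apply e.injective
    apply Subtype.ext
    exact Sigma.ext h1 (heq_of_eq h2)
  refine ⟨T.card, arc X A, ?_, ?_, ?_⟩
  · intro v hv
    have h0 : X v = ∅ := by
      rw [← Finset.disjoint_self_iff_empty]
      exact (hd v).mono_right hv
    have h2 := hXc v
    rw [h0] at h2
    simp at h2
    omega
  · exact local_le X A k hr hXc hAc hd hsr
  · have := chrom_ge X A hr hrs hm3 hXc hAc hd hinj (by rw [Fintype.card_fin, hTc]) hm1 L hm2.le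
    rw [← hPk]
    linarith
end

section
/- For every integer k ≥ 2 and every ε > 0 there exists a finite loopless directed graph G with directed local chromatic number ψ_d(G) = k and fractional chromatic number of the underlying undirected graph χ*(G) > k^k/(k−1)^{k−1} − ε. -/
open Classical

/-- Weighted AM-GM in polynomial form, from Bernoulli. -/
lemma amgm_aux (q : ℕ) (a y : ℝ) (ha : 0 ≤ a) (hy : 0 ≤ y) (hq : 1 ≤ q) :
    ((q : ℝ) + 1) ^ (q + 1) * (a * y ^ q) ≤ (a + q * y) ^ (q + 1) := by
  rcases hy.eq_or_lt with h | h
  · subst h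
    rw [zero_pow (by omega)]
    simp only [mul_zero, add_zero]
    positivity
  · have hq' : (0 : ℝ) < (q : ℝ) + 1 := by positivity
    set u : ℝ := (a + q * y) / (((q : ℝ) + 1) * y) with hu
    have hu0 : 0 ≤ u := by positivity
    have hB := one_add_mul_le_pow (a := u - 1) (by linarith) (q + 1)
    have e1 : 1 + ((q + 1 : ℕ) : ℝ) * (u - 1) = a / y := by
      rw [hu]; push_cast; field_simp; ring
    rw [e1] at hB
    have e2 : 1 + (u - 1) = u := by ring
    rw [e2] at hB
    have e3 : a + q * y = u * (((q : ℝ) + 1) * y) := by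
      rw [hu]; field_simp
    have e4 : a * y ^ q = a / y * y ^ (q + 1) := by
      rw [pow_succ]; field_simp
    rw [e3, e4, mul_pow, mul_pow]
    calc ((q : ℝ) + 1) ^ (q + 1) * (a / y * y ^ (q + 1))
        = a / y * (((q : ℝ) + 1) ^ (q + 1) * y ^ (q + 1)) := by ring
      _ ≤ _ := by gcongr

lemma amgm_aux2 (q : ℕ) (a b : ℝ) (ha : 0 ≤ a) (hb : 0 ≤ b) (hq : 1 ≤ q) :
    a * b ^ q * (((q : ℝ) + 1) ^ (q + 1) / (q : ℝ) ^ q) ≤ (a + b) ^ (q + 1) := by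
  have hq0 : (0 : ℝ) < q := by exact_mod_cast hq
  have := amgm_aux q a (b / q) ha (by positivity) hq
  have e : (q : ℝ) * (b / q) = b := by field_simp
  rw [e, div_pow] at this
  refine le_trans (le_of_eq ?_) this
  field_simp

/-- The universal digraph. -/
def univD (m q : ℕ) (a b : Fin m × (Fin q → Fin m)) : Prop :=
  b.1 ∈ Set.range a.2 ∧ b.1 ≠ a.1

lemma indep_card (m q n : ℕ) (e : Fin n ≃ Fin m × (Fin q → Fin m)) (S : Finset (Fin n))
    (hS : IsIndepF (underlying (fun a b => univD m q (e a) (e b))) S) :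
    ∃ t : ℕ, t ≤ m ∧ S.card ≤ t * (m - t + 1) ^ q := by
  set I : Finset (Fin m) := S.image (fun a => (e a).1) with hI
  have hIm : I.card ≤ m := by simpa using Finset.card_le_univ I
  refine ⟨I.card, hIm, ?_⟩
  have hsub : S.image e ⊆ I.biUnion (fun i =>
      ({i} : Finset (Fin m)) ×ˢ Fintype.piFinset (fun _ : Fin q => insert i Iᶜ)) := by
    intro v hv
    obtain ⟨a, ha, rfl⟩ := Finset.mem_image.1 hv
    have hai : (e a).1 ∈ I := Finset.mem_image.2 ⟨a, ha, rfl⟩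
    refine Finset.mem_biUnion.2 ⟨(e a).1, hai, ?_⟩
    refine Finset.mem_product.2 ⟨by simp, ?_⟩
    rw [Fintype.mem_piFinset]
    intro x
    by_contra hx
    simp only [Finset.mem_insert, Finset.mem_compl, not_or, not_not] at hx
    obtain ⟨hne, hxI⟩ := hx
    obtain ⟨b, hb, hbe⟩ := Finset.mem_image.1 hxI
    refine hS a ha b hb ?_
    rw [underlying, SimpleGraph.fromRel_adj]
    refine ⟨?_, Or.inl ⟨⟨x, hbe.symm⟩, ?_⟩⟩
    · rintro rfl
      exact hne hbe.symm
    · intro h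
      exact hne (hbe.symm.trans h)
  calc S.card = (S.image e).card := (Finset.card_image_of_injective _ e.injective).symm
    _ ≤ _ := Finset.card_le_card hsub
    _ ≤ ∑ i ∈ I, (({i} : Finset (Fin m)) ×ˢ
          Fintype.piFinset (fun _ : Fin q => insert i Iᶜ)).card := Finset.card_biUnion_le
    _ ≤ ∑ i ∈ I, (m - I.card + 1) ^ q := by
        refine Finset.sum_le_sum fun i hi => ?_
        rw [Finset.card_product, Fintype.card_piFinset]
        simp only [Finset.card_singleton, one_mul, Finset.prod_const, Finset.card_univ,
          Fintype.card_fin]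
        refine Nat.pow_le_pow_left ?_ _
        refine (Finset.card_insert_le _ _).trans ?_
        rw [Finset.card_compl, Fintype.card_fin]
    _ = _ := by rw [Finset.sum_const, smul_eq_mul]

lemma fracChrom_ge {V : Type*} [Fintype V] (G : SimpleGraph V) (α : ℝ) (hα : 0 < α)
    (h : ∀ S : Finset V, IsIndepF G S → (S.card : ℝ) ≤ α) :
    (Fintype.card V : ℝ) / α ≤ fracChrom G := by
  refine le_csInf ?_ ?_
  · refine ⟨_, ⟨⟨fun A => if ∃ v, A = {v} then 1 else 0, ?_, ?_, ?_⟩, rfl⟩⟩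
    · intro A
      split_ifs <;> norm_num
    · intro A hA
      have : ∃ v, A = {v} := by
        by_contra hc
        simp [hc] at hA
      obtain ⟨v, rfl⟩ := this
      intro a ha b hb
      rw [Finset.mem_singleton] at ha hb
      subst ha; subst hb
      exact G.irrefl
    · intro v
      have := Finset.single_le_sum (s := (Finset.univ : Finset (Finset V)))
        (f := fun A => if v ∈ A then (if ∃ v, A = {v} then (1 : ℝ) else 0) else 0)
        (fun A _ => by split_ifs <;> norm_num) (Finset.mem_univ {v})
      refine le_trans (le_of_eq ?_) this
      simp
  · rintro w ⟨f, rfl⟩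
    rw [div_le_iff₀ hα]
    calc (Fintype.card V : ℝ) = ∑ v : V, (1 : ℝ) := by simp
      _ ≤ ∑ v : V, ∑ A : Finset V, (if v ∈ A then f.x A else 0) :=
          Finset.sum_le_sum fun v _ => f.cover v
      _ = ∑ A : Finset V, ∑ v : V, (if v ∈ A then f.x A else 0) := Finset.sum_comm
      _ = ∑ A : Finset V, (A.card : ℝ) * f.x A := by
          refine Finset.sum_congr rfl fun A _ => ?_
          simp [Finset.sum_ite_mem]
      _ ≤ ∑ A : Finset V, f.x A * α := by
          refine Finset.sum_le_sum fun A _ => ?_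
          by_cases h0 : f.x A = 0
          · simp [h0]
          · rw [mul_comm]
            exact mul_le_mul_of_nonneg_left (h A (f.supp A h0)) (f.nonneg A)
      _ = totalWeight f * α := by rw [totalWeight, Finset.sum_mul]

lemma dirLocal_univ (m q n : ℕ) (hm : q + 1 ≤ m) (e : Fin n ≃ Fin m × (Fin q → Fin m)) :
    dirLocalChrom (fun a b => univD m q (e a) (e b)) = q + 1 := by
  have lower : ∀ c : Fin n → ℕ,
      (∀ u v, (underlying (fun a b => univD m q (e a) (e b))).Adj u v → c u ≠ c v) →
      q ≤ Finset.univ.sup (fun v => (c '' {u | univD m q (e v) (e u)}).ncard) := by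
    intro c hc
    let w : Fin (q + 1) → Fin n := fun i =>
      e.symm (Fin.castLE hm i, fun x => Fin.castLE hm (i.succAbove x))
    have hw : ∀ i j, i ≠ j → univD m q (e (w i)) (e (w j)) := by
      intro i j hij
      obtain ⟨x, hx⟩ := Fin.exists_succAbove_eq hij.symm
      simp only [w, Equiv.apply_symm_apply, univD]
      refine ⟨⟨x, congrArg (Fin.castLE hm) hx⟩, ?_⟩
      intro h
      exact hij ((Fin.castLE_injective hm h).symm)
    have hinj : Function.Injective (fun i => c (w i)) := by
      intro i j hij
      by_contra hne
      refine hc (w i) (w j) ?_ hij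
      rw [underlying, SimpleGraph.fromRel_adj]
      refine ⟨?_, Or.inl (hw i j hne)⟩
      intro h
      exact (hw i j hne).2 (by rw [h])
    refine le_trans ?_ (Finset.le_sup (f := fun v =>
      (c '' {u | univD m q (e v) (e u)}).ncard) (Finset.mem_univ (w 0)))
    have hsub : Set.range (fun x : Fin q => c (w x.succ)) ⊆
        c '' {u | univD m q (e (w 0)) (e u)} := by
      rintro _ ⟨x, rfl⟩
      exact ⟨_, hw 0 x.succ (Fin.succ_ne_zero x).symm, rfl⟩
    have h2 := Set.ncard_le_ncard hsub (Set.toFinite _)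
    have h3 : (Set.range (fun x : Fin q => c (w x.succ))).ncard = q := by
      rw [← Set.image_univ, Set.ncard_image_of_injective]
      · simp [Set.ncard_univ]
      · exact hinj.comp (Fin.succ_injective q)
    rw [h3] at h2
    exact h2
  let c₀ : Fin n → ℕ := fun a => ((e a).1 : ℕ)
  have hc₀ : ∀ u v, (underlying (fun a b => univD m q (e a) (e b))).Adj u v → c₀ u ≠ c₀ v := by
    intro u v h
    rw [underlying, SimpleGraph.fromRel_adj] at h
    intro hE
    have hE' : (e u).1 = (e v).1 := Fin.ext hE
    rcases h.2 with h | h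
    · exact h.2 hE'.symm
    · exact h.2 hE'
  have upper : Finset.univ.sup (fun v => (c₀ '' {u | univD m q (e v) (e u)}).ncard) ≤ q := by
    refine Finset.sup_le fun v _ => ?_
    have hsub : c₀ '' {u | univD m q (e v) (e u)} ⊆
        (fun x : Fin q => (((e v).2 x : Fin m) : ℕ)) '' Set.univ := by
      rintro _ ⟨u, hu, rfl⟩
      obtain ⟨⟨x, hx⟩, -⟩ := hu
      exact ⟨x, trivial, by simp only [c₀, hx]⟩
    refine (Set.ncard_le_ncard hsub (Set.toFinite _)).trans ?_
    refine (Set.ncard_image_le (Set.toFinite _)).trans ?_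
    simp [Set.ncard_univ]
  refine le_antisymm ?_ ?_
  · refine Nat.sInf_le ⟨c₀, hc₀, ?_⟩
    rw [le_antisymm upper (lower c₀ hc₀)]
  · refine le_csInf ⟨_, c₀, hc₀, rfl⟩ ?_
    rintro N ⟨c, hc, rfl⟩
    exact Nat.succ_le_succ (lower c hc)

/-- For every integer `k ≥ 2` and `ε > 0` there is a finite loopless digraph `D` with
`ψ_d(D) = k` and `χ*` of the underlying graph exceeding `k^k/(k-1)^(k-1) - ε`. -/
theorem stmt8 (k : ℕ) (hk : 2 ≤ k) (ε : ℝ) (hε : 0 < ε) :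
    ∃ (n : ℕ) (D : Fin n → Fin n → Prop),
      (∀ v, ¬ D v v) ∧ dirLocalChrom D = k ∧
      (k : ℝ) ^ k / ((k : ℝ) - 1) ^ (k - 1) - ε < fracChrom (underlying D) := by
  obtain ⟨q, rfl⟩ : ∃ q, k = q + 1 := ⟨k - 1, by omega⟩
  have hq : 1 ≤ q := by omega
  have hq0 : (0 : ℝ) < q := by exact_mod_cast hq
  have hcast : ((q + 1 : ℕ) : ℝ) = (q : ℝ) + 1 := by push_cast; ring
  simp only [hcast, add_sub_cancel_right, Nat.add_sub_cancel]
  set C : ℝ := ((q : ℝ) + 1) ^ (q + 1) / (q : ℝ) ^ q with hC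
  have hCpos : 0 < C := by positivity
  have hlim : Filter.Tendsto (fun m : ℕ => ((m : ℝ) / ((m : ℝ) + 1)) ^ (q + 1) * C)
      Filter.atTop (nhds C) := by
    have h1 := tendsto_natCast_div_add_atTop (1 : ℝ)
    have h2 := (h1.pow (q + 1)).mul_const C
    simpa using h2
  have hev := hlim.eventually (lt_mem_nhds (show C - ε < C by linarith))
  obtain ⟨m, hm1, hm2⟩ := (hev.and (Filter.eventually_ge_atTop (q + 1))).exists
  let e : Fin (Fintype.card (Fin m × (Fin q → Fin m))) ≃ Fin m × (Fin q → Fin m) :=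
    (Fintype.equivFin _).symm
  refine ⟨_, fun a b => univD m q (e a) (e b), fun v h => h.2 rfl,
    dirLocal_univ m q _ hm2 e, lt_of_lt_of_le hm1 ?_⟩
  have hα : (0 : ℝ) < ((m : ℝ) + 1) ^ (q + 1) / C := by positivity
  refine le_trans (le_of_eq ?_) (fracChrom_ge _ (((m : ℝ) + 1) ^ (q + 1) / C) hα ?_)
  · simp only [Fintype.card_fin, Fintype.card_prod, Fintype.card_fun, Nat.cast_mul, Nat.cast_pow]
    rw [div_pow]
    field_simp
    exact pow_succ' _ _
  · intro S hS
    obtain ⟨t, htm, ht⟩ := indep_card m q _ e S hS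
    rw [le_div_iff₀ hCpos]
    have ht' : (S.card : ℝ) ≤ (t : ℝ) * ((m : ℝ) - t + 1) ^ q := by
      have : (S.card : ℝ) ≤ ((t * (m - t + 1) ^ q : ℕ) : ℝ) := by exact_mod_cast ht
      rw [Nat.cast_mul, Nat.cast_pow, Nat.cast_add, Nat.cast_sub htm, Nat.cast_one] at this
      exact this
    have htm' : (t : ℝ) ≤ m := by exact_mod_cast htm
    have h3 := amgm_aux2 q t ((m : ℝ) - t + 1) (by positivity) (by linarith) hq
    have e5 : (t : ℝ) + ((m : ℝ) - t + 1) = m + 1 := by ring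
    rw [e5] at h3
    exact (mul_le_mul_of_nonneg_right ht' hCpos.le).trans h3
end
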